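/- arXiv:1305.1675 — 4 statements merged into one kernel-verified Lean document; each statement's English description precedes it below -/
import Mathlib

section
/- There exists a constant C > 0 such that for every connected graph G on n vertices with n ≥ 2, the acquaintance time satisfies AC(G) ≤ C · n² / log n. -/
open scoped Classical

/-- A permutation of the vertices arising from swapping the agents along the edges of a
matching in `G`: every vertex is fixed, or is swapped with a neighbour. -/
def IsMatchingSwap {V : Type*} (G : SimpleGraph V) (σ : Equiv.Perm V) : Prop :=
  ∀ v : V, σ v = v ∨ (G.Adj v (σ v) ∧ σ (σ v) = v)

/-- `positions σ i a` is the vertex occupied after `i` rounds by the agent that initially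
occupies vertex `a`, when round `j` rearranges agents by the permutation `σ j`. -/
def positions {V : Type*} (σ : ℕ → Equiv.Perm V) : ℕ → V → V
  | 0 => id
  | (i + 1) => (σ i) ∘ positions σ i

/-- The agents starting at `a` and `b` become acquainted within the first `t` rounds:
at some time `i ≤ t` they occupy adjacent vertices of `G`. -/
def Acquainted {V : Type*} (G : SimpleGraph V) (σ : ℕ → Equiv.Perm V) (t : ℕ) (a b : V) : Prop :=
  ∃ i ≤ t, G.Adj (positions σ i a) (positions σ i b)

/-- The acquaintance time `AC G`: the least number `t` of rounds for which there is a
strategy (a sequence of matchings, one per round, whose swaps move the agents) after which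
every pair of distinct agents is acquainted. -/
noncomputable def AC {V : Type*} (G : SimpleGraph V) : ℕ :=
  sInf {t | ∃ σ : ℕ → Equiv.Perm V, (∀ i < t, IsMatchingSwap G (σ i)) ∧
    ∀ a b : V, a ≠ b → Acquainted G σ t a b}

/-- The helicopter acquaintance time `bAC G`: as `AC G`, but each round may rearrange the
agents by an arbitrary permutation of the vertices. -/
noncomputable def bAC {V : Type*} (G : SimpleGraph V) : ℕ :=
  sInf {t | ∃ σ : ℕ → Equiv.Perm V, ∀ a b : V, a ≠ b → Acquainted G σ t a b}

/-!
Let `Δ` be the maximum degree of `G`, on `n` vertices.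

If `Δ ≥ log n`, take a vertex `r` of degree `Δ`. Any `Δ` agents can be gathered on the neighbours
of `r`, after which all other agents visit `r` one by one while the gathered ones keep their places.
Agents walk to `r` in order of increasing distance, in a pipeline that keeps them two levels apart,
so that either operation takes `O(n)` rounds. Treating all agents in `O(n / Δ)` such batches takes
`O(n ^ 2 / Δ)` rounds.

If `Δ < log n`, the cube of `G` has a Hamiltonian path, and `n` rounds of odd–even transposition
along it exchange every two agents directly. The exchanges of one such round are along walks of
length at most `3`, each of which crosses fewer than `(Δ + 1) ^ 6` others, so greedy colouring
splits them into that many classes that can be played in parallel. This takes `O(n * (Δ + 1) ^ 6)`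
rounds, which is `O(n ^ 2 / log n)`.
-/

namespace Acquaintance

open Equiv

/-! ### Finite strategies -/

section

variable {V : Type*} {G : SimpleGraph V}

/-- The permutation effected by playing the rounds of `l` from head to tail: the agent
starting at `v` ends at `net l v`. -/
def net (l : List (Perm V)) : Perm V := l.reverse.prod

/-- The agents starting at `a` and `b` are acquainted once the rounds of `l` have been played. -/
def Met (G : SimpleGraph V) (l : List (Perm V)) (a b : V) : Prop :=
  ∃ p, p <+: l ∧ G.Adj (net p a) (net p b)

/-- A finite strategy: every round rearranges the agents along a matching of `G`. -/
def IsStrategy (G : SimpleGraph V) (l : List (Perm V)) : Prop :=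
  ∀ σ ∈ l, IsMatchingSwap G σ

@[simp]
theorem net_nil : net ([] : List (Perm V)) = 1 := rfl

@[simp]
theorem net_singleton (σ : Perm V) : net [σ] = σ := by
  simp [net]

theorem net_append (l l' : List (Perm V)) : net (l ++ l') = net l' * net l := by
  simp [net]

theorem net_cons (σ : Perm V) (l : List (Perm V)) : net (σ :: l) = net l * σ := by
  simp [net]

theorem Met.symm {l : List (Perm V)} {a b : V} : Met G l a b → Met G l b a
  | ⟨p, hp, h⟩ => ⟨p, hp, h.symm⟩

theorem Met.append_right {l : List (Perm V)} {a b : V} (l' : List (Perm V)) :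
    Met G l a b → Met G (l ++ l') a b
  | ⟨p, hp, h⟩ => ⟨p, hp.trans (List.prefix_append l l'), h⟩

theorem Met.append_left (l : List (Perm V)) {l' : List (Perm V)} {a b : V} :
    Met G l' (net l a) (net l b) → Met G (l ++ l') a b
  | ⟨p, hp, h⟩ => ⟨l ++ p, (List.prefix_append_right_inj l).2 hp, by
      simpa only [net_append, Perm.mul_apply] using h⟩

theorem met_of_adj_net {l : List (Perm V)} {a b : V} (h : G.Adj (net l a) (net l b)) :
    Met G l a b :=
  ⟨l, List.prefix_rfl, h⟩

theorem IsStrategy.append {l l' : List (Perm V)} (h : IsStrategy G l) (h' : IsStrategy G l') :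
    IsStrategy G (l ++ l') :=
  fun σ hσ => (List.mem_append.1 hσ).elim (h σ) (h' σ)

theorem isMatchingSwap_one (G : SimpleGraph V) : IsMatchingSwap G 1 := fun _ => Or.inl rfl

theorem isMatchingSwap_swap {x y : V} (h : x = y ∨ G.Adj x y) :
    IsMatchingSwap G (swap x y) := by
  obtain rfl | h := h
  · rw [swap_self]; exact isMatchingSwap_one G
  intro v
  by_cases hx : v = x
  · exact Or.inr (by simpa [hx] using h)
  by_cases hy : v = y
  · exact Or.inr (by simpa [hy] using h.symm)
  · exact Or.inl (swap_apply_of_ne_of_ne hx hy)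

theorem IsMatchingSwap.mul {σ τ : Perm V} (hσ : IsMatchingSwap G σ) (hτ : IsMatchingSwap G τ)
    (h : σ.Disjoint τ) : IsMatchingSwap G (σ * τ) := by
  intro v
  rcases h v with hv | hv
  · have hcomm : σ (τ v) = τ v := by rw [← Perm.mul_apply, h.commute.eq, Perm.mul_apply, hv]
    have hcomm' : σ (τ (τ v)) = τ (τ v) := by
      rw [← Perm.mul_apply, h.commute.eq, Perm.mul_apply, hcomm]
    simpa only [Perm.mul_apply, hcomm, hcomm'] using hτ v
  · have hcomm : τ (σ v) = σ v := by rw [← Perm.mul_apply, ← h.commute.eq, Perm.mul_apply, hv]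
    simpa only [Perm.mul_apply, hv, hcomm] using hσ v

theorem positions_getD (l : List (Perm V)) {i : ℕ} (hi : i ≤ l.length) :
    positions (fun j => l.getD j 1) i = net (l.take i) := by
  induction i with
  | zero => rfl
  | succ i ih =>
    have hlt : i < l.length := hi
    rw [positions, ih hlt.le, List.take_succ_eq_append_getElem hlt, net_append, net_singleton,
      List.getD_eq_getElem l 1 hlt, Perm.coe_mul]

theorem AC_le_length {l : List (Perm V)} (hl : IsStrategy G l)
    (hmet : ∀ a b, a ≠ b → Met G l a b) : AC G ≤ l.length := by
  refine Nat.sInf_le ⟨fun j => l.getD j 1, fun j hj => ?_, fun a b hab => ?_⟩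
  · simpa only [List.getD_eq_getElem l 1 hj] using hl _ (List.getElem_mem hj)
  · obtain ⟨p, hp, hadj⟩ := hmet a b hab
    refine ⟨p.length, hp.length_le, ?_⟩
    rwa [positions_getD l hp.length_le, ← List.prefix_iff_eq_take.1 hp]

end

/-! ### Permutations realizable within a set of vertices -/

section

variable {V : Type*} {G : SimpleGraph V}

/-- The permutation `σ` moves no vertex outside `W`. -/
def SupportedOn (W : Set V) (σ : Perm V) : Prop :=
  ∀ v ∉ W, σ v = v

theorem SupportedOn.mono {W W' : Set V} {σ : Perm V} (h : SupportedOn W σ) (hW : W ⊆ W') :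
    SupportedOn W' σ :=
  fun v hv => h v fun hvW => hv (hW hvW)

theorem supportedOn_one (W : Set V) : SupportedOn W 1 := fun _ _ => rfl

theorem SupportedOn.mul {W : Set V} {σ τ : Perm V} (hσ : SupportedOn W σ)
    (hτ : SupportedOn W τ) : SupportedOn W (σ * τ) := fun v hv => by
  rw [Perm.mul_apply, hτ v hv, hσ v hv]

theorem SupportedOn.apply_mem {W : Set V} {σ : Perm V} (h : SupportedOn W σ) {v : V}
    (hv : v ∈ W) : σ v ∈ W := by
  by_contra hmem
  exact hmem ((σ.injective (h _ hmem)).symm ▸ hv)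

theorem SupportedOn.net {W : Set V} {l : List (Perm V)} (h : ∀ σ ∈ l, SupportedOn W σ) :
    SupportedOn W (net l) := by
  induction l with
  | nil => exact supportedOn_one W
  | cons σ l ih =>
    rw [List.forall_mem_cons] at h
    exact net_cons σ l ▸ (ih h.2).mul h.1

theorem SupportedOn.disjoint {W W' : Set V} {σ τ : Perm V} (hσ : SupportedOn W σ)
    (hτ : SupportedOn W' τ) (hW : Disjoint W W') : σ.Disjoint τ := fun v => by
  by_cases hv : v ∈ W
  · exact Or.inr (hτ v (Set.disjoint_left.1 hW hv))
  · exact Or.inl (hσ v hv)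

section ParallelPlay

variable {W W' : Set V} (hW : Disjoint W W') {l l' : List (Perm V)}
include hW

theorem zipWith_mul_comm (hl : ∀ σ ∈ l, SupportedOn W σ) (hl' : ∀ σ ∈ l', SupportedOn W' σ) :
    l.zipWith (· * ·) l' = l'.zipWith (· * ·) l := by
  induction l generalizing l' with
  | nil => simp
  | cons σ l ih =>
    obtain _ | ⟨τ, l'⟩ := l'
    · simp
    rw [List.forall_mem_cons] at hl hl'
    rw [List.zipWith_cons_cons, List.zipWith_cons_cons, ih hl.2 hl'.2,
      (hl.1.disjoint hl'.1 hW).commute.eq]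

theorem net_zipWith (hl : ∀ σ ∈ l, SupportedOn W σ) (hl' : ∀ σ ∈ l', SupportedOn W' σ)
    (hlen : l.length = l'.length) : net (l.zipWith (· * ·) l') = net l * net l' := by
  induction l generalizing l' with
  | nil => simp [List.length_eq_zero_iff.1 hlen.symm]
  | cons σ l ih =>
    obtain _ | ⟨τ, l'⟩ := l'
    · simp at hlen
    rw [List.forall_mem_cons] at hl hl'
    have hcomm : σ * net l' = net l' * σ :=
      (hl.1.disjoint (SupportedOn.net hl'.2) hW).commute.eq
    rw [List.zipWith_cons_cons, net_cons, net_cons, net_cons,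
      ih hl.2 hl'.2 (Nat.succ.inj hlen), mul_assoc, mul_assoc, ← mul_assoc _ σ, ← hcomm, mul_assoc]

theorem Met.zipWith_mul (hl : ∀ σ ∈ l, SupportedOn W σ) (hl' : ∀ σ ∈ l', SupportedOn W' σ)
    (hlen : l.length = l'.length) {a b : V} (ha : a ∈ W) (hb : b ∈ W) (h : Met G l a b) :
    Met G (l.zipWith (· * ·) l') a b := by
  obtain ⟨p, hp, hadj⟩ := h
  obtain ⟨i, rfl⟩ : ∃ i, p = l.take i := ⟨p.length, List.prefix_iff_eq_take.1 hp⟩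
  have hsupp : ∀ σ ∈ l.take i, SupportedOn W σ := fun σ hσ => hl σ (List.mem_of_mem_take hσ)
  have hsupp' : ∀ σ ∈ l'.take i, SupportedOn W' σ := fun σ hσ => hl' σ (List.mem_of_mem_take hσ)
  have hnet : ∀ v ∈ W, net ((l.zipWith (· * ·) l').take i) v = net (l.take i) v := fun v hv => by
    rw [List.take_zipWith, net_zipWith hW hsupp hsupp' (by simp [hlen]), Perm.mul_apply,
      SupportedOn.net hsupp' v (Set.disjoint_left.1 hW hv)]
  exact ⟨_, List.take_prefix i _, by rwa [hnet a ha, hnet b hb]⟩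

end ParallelPlay

theorem exists_mul_of_mem_zipWith {l l' : List (Perm V)} {σ : Perm V}
    (h : σ ∈ l.zipWith (· * ·) l') : ∃ α ∈ l, ∃ β ∈ l', α * β = σ := by
  rw [← List.map_uncurry_zip_eq_zipWith, List.mem_map] at h
  obtain ⟨⟨α, β⟩, hmem, rfl⟩ := h
  exact ⟨α, (List.of_mem_zip hmem).1, β, (List.of_mem_zip hmem).2, rfl⟩

/-- The permutation `π` can be effected by `k` rounds that move no agent outside `W`, in such
a way that every agent it displaces meets the agent starting at its destination. -/
def RealizableIn (G : SimpleGraph V) (W : Set V) (k : ℕ) (π : Perm V) : Prop :=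
  ∃ l : List (Perm V), l.length = k ∧ IsStrategy G l ∧ (∀ σ ∈ l, SupportedOn W σ) ∧
    net l = π ∧ ∀ v, π v ≠ v → Met G l v (π v)

namespace RealizableIn

variable {W W' : Set V} {k k' : ℕ} {π π' : Perm V}

theorem one (G : SimpleGraph V) (W : Set V) (k : ℕ) : RealizableIn G W k 1 := by
  refine ⟨List.replicate k 1, List.length_replicate, fun σ hσ => ?_, fun σ hσ => ?_, ?_, ?_⟩
  · exact List.eq_of_mem_replicate hσ ▸ isMatchingSwap_one G
  · exact List.eq_of_mem_replicate hσ ▸ supportedOn_one W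
  · simp [net]
  · simp

theorem supportedOn : RealizableIn G W k π → SupportedOn W π
  | ⟨_, _, _, hW, hnet, _⟩ => hnet ▸ SupportedOn.net hW

theorem mono (h : RealizableIn G W k π) (hW : W ⊆ W') : RealizableIn G W' k π :=
  let ⟨l, hk, hl, hsupp, hnet, hmet⟩ := h
  ⟨l, hk, hl, fun σ hσ => (hsupp σ hσ).mono hW, hnet, hmet⟩

theorem append (h : RealizableIn G W k π) (h' : RealizableIn G W k' π') (hd : π.Disjoint π') :
    RealizableIn G W (k + k') (π * π') := by
  obtain ⟨l, rfl, hl, hsupp, rfl, hmet⟩ := h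
  obtain ⟨l', rfl, hl', hsupp', rfl, hmet'⟩ := h'
  refine ⟨l ++ l', List.length_append, hl.append hl', fun σ hσ =>
    (List.mem_append.1 hσ).elim (hsupp σ) (hsupp' σ), by rw [net_append, hd.commute.eq],
    fun v hv => ?_⟩
  rcases hd v with hfix | hfix
  · have hfix' : net l (net l' v) = net l' v := by
      rw [← Perm.mul_apply, hd.commute.eq, Perm.mul_apply, hfix]
    rw [Perm.mul_apply, hfix'] at hv ⊢
    exact Met.append_left l (by simpa only [hfix, hfix'] using hmet' v hv)
  · rw [Perm.mul_apply, hfix] at hv ⊢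
    exact (hmet v hv).append_right l'

theorem mono_length (h : RealizableIn G W k π) (hk : k ≤ k') : RealizableIn G W k' π := by
  obtain ⟨m, rfl⟩ := Nat.exists_eq_add_of_le hk
  simpa only [mul_one] using h.append (one G W m) (Perm.disjoint_one_right π)

theorem mul (h : RealizableIn G W k π) (h' : RealizableIn G W' k π') (hW : Disjoint W W') :
    RealizableIn G (W ∪ W') k (π * π') := by
  obtain ⟨l, hk, hl, hsupp, rfl, hmet⟩ := h
  obtain ⟨l', hk', hl', hsupp', rfl, hmet'⟩ := h'
  have hπ : SupportedOn W (net l) := SupportedOn.net hsupp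
  have hπ' : SupportedOn W' (net l') := SupportedOn.net hsupp'
  have hlen : l.length = l'.length := hk.trans hk'.symm
  refine ⟨l.zipWith (· * ·) l', by simp [hk, hk'], fun σ hσ => ?_, fun σ hσ => ?_,
    net_zipWith hW hsupp hsupp' hlen, fun v hv => ?_⟩
  · obtain ⟨α, hα, β, hβ, rfl⟩ := exists_mul_of_mem_zipWith hσ
    exact IsMatchingSwap.mul (hl α hα) (hl' β hβ) ((hsupp α hα).disjoint (hsupp' β hβ) hW)
  · obtain ⟨α, hα, β, hβ, rfl⟩ := exists_mul_of_mem_zipWith hσ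
    exact ((hsupp α hα).mono Set.subset_union_left).mul
      ((hsupp' β hβ).mono Set.subset_union_right)
  · by_cases hvW : v ∈ W
    · rw [Perm.mul_apply, hπ' v (Set.disjoint_left.1 hW hvW)] at hv ⊢
      exact (hmet v hv).zipWith_mul hW hsupp hsupp' hlen hvW (hπ.apply_mem hvW)
    · have hvW' : v ∈ W' := by
        by_contra hvW'
        exact hv (by rw [Perm.mul_apply, hπ' v hvW', hπ v hvW])
      rw [Perm.mul_apply, hπ _ (Set.disjoint_right.1 hW (hπ'.apply_mem hvW'))] at hv ⊢
      rw [zipWith_mul_comm hW hsupp hsupp']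
      exact (hmet' v hv).zipWith_mul hW.symm hsupp' hsupp hlen.symm hvW' (hπ'.apply_mem hvW')

end RealizableIn

end

/-! ### Exchanges along walks, played in parallel -/

section

variable {V : Type*} {G : SimpleGraph V}

namespace RealizableIn

theorem swap_of_list {W : Set V} {x y : V} {l : List (Perm V)} (hl : IsStrategy G l)
    (hsupp : ∀ σ ∈ l, SupportedOn W σ) (hnet : net l = swap x y) (hmet : Met G l x y) :
    RealizableIn G W l.length (swap x y) := by
  refine ⟨l, rfl, hl, hsupp, hnet, fun v hv => ?_⟩
  obtain rfl | rfl := (swap_apply_ne_self_iff.1 hv).2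
  · rwa [swap_apply_left]
  · rw [swap_apply_right]; exact hmet.symm

theorem swap_of_adj {x y : V} (h : G.Adj x y) : RealizableIn G {x, y} 1 (swap x y) := by
  refine swap_of_list (l := [swap x y]) ?_ ?_ (net_singleton _)
    (met_of_adj_net (by simpa using h.symm))
  · simpa [IsStrategy] using isMatchingSwap_swap (Or.inr h)
  · intro σ hσ v hv
    simp only [Set.mem_insert_iff, Set.mem_singleton_iff, not_or] at hv
    rw [List.mem_singleton.1 hσ, swap_apply_of_ne_of_ne hv.1 hv.2]

theorem swap_conj {W : Set V} {k : ℕ} {x u y : V} (h : RealizableIn G W k (swap u y))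
    (hxu : G.Adj x u) (hxy : x ≠ y) (huy : u ≠ y) :
    RealizableIn G (insert x (insert u W)) (1 + k + 1) (swap x y) := by
  obtain ⟨l, rfl, hl, hsupp, hnet, hmet⟩ := h
  have hswap : IsStrategy G [swap x u] := by
    simpa [IsStrategy] using isMatchingSwap_swap (Or.inr hxu)
  have hswap' : ∀ σ ∈ [swap x u], SupportedOn (insert x (insert u W)) σ := fun σ hσ v hv => by
    simp only [Set.mem_insert_iff, not_or] at hv
    rw [List.mem_singleton.1 hσ, swap_apply_of_ne_of_ne hv.1 hv.2.1]
  have hlen : 1 + l.length + 1 = ([swap x u] ++ l ++ [swap x u]).length := by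
    simp [add_comm]
  rw [hlen]
  refine swap_of_list ((hswap.append hl).append hswap) (fun σ hσ => ?_) ?_
    ((Met.append_left _ ?_).append_right _)
  · simp only [List.mem_append] at hσ
    obtain (hσ | hσ) | hσ := hσ
    · exact hswap' σ hσ
    · exact (hsupp σ hσ).mono ((Set.subset_insert u W).trans (Set.subset_insert x _))
    · exact hswap' σ hσ
  · rw [net_append, net_append, net_singleton, hnet, swap_comm x u, swap_comm u y, ← mul_assoc,
      swap_mul_swap_mul_swap huy.symm hxy.symm]
  · simpa only [net_singleton, swap_apply_left, swap_apply_of_ne_of_ne hxy.symm huy.symm]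
      using hmet u (by simpa using huy.symm)

theorem swap_of_walk {x y : V} (p : G.Walk x y) (hxy : x ≠ y) {k : ℕ}
    (hk : 2 * p.length ≤ k + 1) : RealizableIn G {z | z ∈ p.support} k (swap x y) := by
  induction p generalizing k with
  | nil => exact absurd rfl hxy
  | @cons x u y h p ih =>
    rw [SimpleGraph.Walk.length_cons] at hk
    by_cases huy : u = y
    · subst huy
      refine ((swap_of_adj h).mono_length (by omega)).mono ?_
      simp [Set.insert_subset_iff]
    · have hpos : p.length ≠ 0 := fun h0 => huy (SimpleGraph.Walk.eq_of_length_eq_zero h0)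
      obtain ⟨m, rfl⟩ : ∃ m, k = 1 + m + 1 := ⟨k - 2, by omega⟩
      refine ((ih huy (by omega)).swap_conj h hxy huy).mono ?_
      rintro z (rfl | rfl | hz)
      · simp
      · simp
      · simpa using Or.inr hz

end RealizableIn

section DisjointProducts

variable {ι : Type*} {I : Finset ι} {τ : ι → Perm V}

theorem noncommProd_apply_of_apply_ne (hτ : (I : Set ι).Pairwise fun i j => (τ i).Disjoint (τ j))
    (comm) {i : ι} (hi : i ∈ I) {v : V} (hv : τ i v ≠ v) : I.noncommProd τ comm v = τ i v := by
  have hdisj : (τ i).Disjoint ((I.erase i).noncommProd τ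
      (comm.mono (Finset.coe_subset.2 (Finset.erase_subset i I)))) :=
    Perm.disjoint_noncommProd_right _ fun j hj =>
      hτ hi (Finset.mem_of_mem_erase hj) (Finset.ne_of_mem_erase hj).symm
  rw [← Finset.mul_noncommProd_erase I hi τ comm, Perm.mul_apply, (hdisj v).resolve_left hv]

theorem noncommProd_apply_of_forall_apply_eq (comm) {v : V} (hv : ∀ i ∈ I, τ i v = v) :
    I.noncommProd τ comm v = v :=
  Finset.noncommProd_induction I τ comm (fun σ => σ v = v)
    (fun σ σ' h h' => by rw [Perm.mul_apply, h', h]) rfl hv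

namespace RealizableIn

theorem noncommProd {W : ι → Set V} {k : ℕ} (hW : (I : Set ι).PairwiseDisjoint W)
    (h : ∀ i ∈ I, RealizableIn G (W i) k (τ i)) (comm) :
    RealizableIn G (⋃ i ∈ I, W i) k (I.noncommProd τ comm) := by
  induction I using Finset.induction_on with
  | empty => exact one G _ k
  | insert i I hi ih =>
    rw [Finset.noncommProd_insert_of_notMem _ _ _ _ hi, Finset.set_biUnion_insert]
    rw [Finset.coe_insert] at hW
    refine (h i (Finset.mem_insert_self i I)).mul (ih (hW.subset (Set.subset_insert _ _))
      (fun j hj => h j (Finset.mem_insert_of_mem hj)) _) ?_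
    simp only [Set.disjoint_iUnion_right]
    exact fun j hj => hW (Set.mem_insert _ _) (Set.mem_insert_of_mem _ hj)
      (ne_of_mem_of_not_mem hj hi).symm

theorem noncommProd_of_coloring {W : ι → Set V} {k m : ℕ} (c : ι → ℕ)
    (hτ : (I : Set ι).Pairwise fun i j => (τ i).Disjoint (τ j)) (hm : ∀ i ∈ I, c i < m)
    (hc : ∀ i ∈ I, ∀ j ∈ I, i ≠ j → c i = c j → Disjoint (W i) (W j))
    (h : ∀ i ∈ I, RealizableIn G (W i) k (τ i)) (comm) :
    RealizableIn G Set.univ (k * m) (I.noncommProd τ comm) := by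
  induction m generalizing I with
  | zero =>
    obtain rfl : I = ∅ := Finset.eq_empty_of_forall_notMem fun i hi => absurd (hm i hi) (by simp)
    exact one G _ _
  | succ m ih =>
    have hsub := Finset.filter_subset (fun i => c i < m) I
    have hsub' := Finset.filter_subset (fun i => ¬c i < m) I
    have hdisj := Finset.disjoint_filter_filter_not I I (fun i => c i < m)
    have hsplit : I.noncommProd τ comm
        = (I.filter (c · < m)).noncommProd τ (comm.mono (Finset.coe_subset.2 hsub))
          * (I.filter (¬c · < m)).noncommProd τ (comm.mono (Finset.coe_subset.2 hsub')) := by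
      rw [← Finset.noncommProd_union_of_disjoint hdisj τ
        (by rwa [Finset.filter_union_filter_not_eq])]
      exact Finset.noncommProd_congr (Finset.filter_union_filter_not_eq _ I).symm
        (fun _ _ => rfl) _
    rw [hsplit, Nat.mul_succ]
    have hclass : ∀ i ∈ I.filter (¬c · < m), i ∈ I ∧ c i = m := fun i hi => by
      rw [Finset.mem_filter, not_lt] at hi
      exact ⟨hi.1, le_antisymm (Nat.lt_succ_iff.1 (hm i hi.1)) hi.2⟩
    refine append (ih (hτ.mono (Finset.coe_subset.2 hsub)) (fun i hi => (Finset.mem_filter.1 hi).2)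
      (fun i hi j hj => hc i (hsub hi) j (hsub hj)) (fun i hi => h i (hsub hi)) _)
      ((noncommProd (fun i hi j hj hij => hc i (hsub' hi) j (hsub' hj) hij
        ((hclass i hi).2.trans (hclass j hj).2.symm)) (fun i hi => h i (hsub' hi)) _).mono
        (Set.subset_univ _)) ?_
    refine Perm.disjoint_noncommProd_right _ fun j hj =>
      (Perm.disjoint_noncommProd_right _ fun i hi => ?_).symm
    exact hτ (hsub' hj) (hsub hi) (Finset.disjoint_left.1 hdisj hi |>.imp (· ▸ hj))

end RealizableIn

theorem exists_coloring_of_degree_lt (H : SimpleGraph ι) (I : Finset ι) {D : ℕ}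
    (hD : ∀ i ∈ I, (I.filter (H.Adj i)).card < D) :
    ∃ c : ι → ℕ, (∀ i ∈ I, c i < D) ∧ ∀ i ∈ I, ∀ j ∈ I, H.Adj i j → c i ≠ c j := by
  induction I using Finset.induction_on with
  | empty => exact ⟨0, by simp, by simp⟩
  | insert a I ha ih =>
    have hdeg : ∀ i ∈ insert a I, (I.filter (H.Adj i)).card < D := fun i hi =>
      (Finset.card_le_card (Finset.filter_subset_filter _ (Finset.subset_insert a I))).trans_lt
        (hD i hi)
    obtain ⟨c, hcD, hc⟩ := ih fun i hi => hdeg i (Finset.mem_insert_of_mem hi)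
    obtain ⟨k, hkD, hk⟩ := Finset.exists_mem_notMem_of_card_lt_card
      (s := (I.filter (H.Adj a)).image c) (t := Finset.range D)
      (by simpa using Finset.card_image_le.trans_lt (hdeg a (Finset.mem_insert_self a I)))
    have hfresh : ∀ j ∈ I, H.Adj a j → c j ≠ k := fun j hj hadj hcj =>
      hk (Finset.mem_image.2 ⟨j, Finset.mem_filter.2 ⟨hj, hadj⟩, hcj⟩)
    have hne : ∀ j ∈ I, j ≠ a := fun j hj => ne_of_mem_of_not_mem hj ha
    refine ⟨Function.update c a k, ?_, ?_⟩ <;> simp only [Finset.forall_mem_insert]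
    · refine ⟨by simpa using hkD, fun i hi => ?_⟩
      rw [Function.update_of_ne (hne i hi)]
      exact hcD i hi
    · refine ⟨⟨fun h => absurd h (H.loopless.irrefl a), fun j hj hadj => ?_⟩,
        fun i hi => ⟨fun hadj => ?_, fun j hj hadj => ?_⟩⟩
      · rw [Function.update_self, Function.update_of_ne (hne j hj)]
        exact (hfresh j hj hadj).symm
      · rw [Function.update_self, Function.update_of_ne (hne i hi)]
        exact hfresh i hi hadj.symm
      · rw [Function.update_of_ne (hne i hi), Function.update_of_ne (hne j hj)]
        exact hc i hi j hj hadj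

/-- The conflict graph of a family of sets: two indices are adjacent when their sets meet, so
that permutations supported on them cannot be played in parallel. -/
def conflictGraph (W : ι → Set V) : SimpleGraph ι where
  Adj i j := i ≠ j ∧ ¬Disjoint (W i) (W j)
  symm := ⟨fun _ _ h => ⟨h.1.symm, fun hd => h.2 hd.symm⟩⟩
  loopless := ⟨fun _ h => h.1 rfl⟩

theorem RealizableIn.noncommProd_of_conflict_lt {W : ι → Set V} {k D : ℕ}
    (hτ : (I : Set ι).Pairwise fun i j => (τ i).Disjoint (τ j))
    (hD : ∀ i ∈ I, (I.filter ((conflictGraph W).Adj i)).card < D)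
    (h : ∀ i ∈ I, RealizableIn G (W i) k (τ i)) (comm) :
    RealizableIn G Set.univ (k * D) (I.noncommProd τ comm) := by
  obtain ⟨c, hcD, hc⟩ := exists_coloring_of_degree_lt (conflictGraph W) I hD
  exact noncommProd_of_coloring c hτ hcD
    (fun i hi j hj hij hcij => by_contra fun hd => hc i hi j hj ⟨hij, hd⟩ hcij) h comm

end DisjointProducts

theorem RealizableIn.exists_strategy {k n : ℕ} {π : ℕ → Perm V}
    (h : ∀ t < n, RealizableIn G Set.univ k (π t)) :
    ∃ l : List (Perm V), l.length = k * n ∧ IsStrategy G l ∧ ⇑(net l) = positions π n ∧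
      ∀ t < n, ∀ a b, a ≠ b → π t (positions π t a) = positions π t b → Met G l a b := by
  induction n with
  | zero => exact ⟨[], rfl, by simp [IsStrategy], rfl, by simp⟩
  | succ n ih =>
    obtain ⟨l, hlen, hl, hnet, hmet⟩ := ih fun t ht => h t (Nat.lt_succ_of_lt ht)
    obtain ⟨l', rfl, hl', -, hnet', hmet'⟩ := h n (Nat.lt_succ_self n)
    refine ⟨l ++ l', by rw [List.length_append, hlen, Nat.mul_succ], hl.append hl', ?_,
      fun t ht a b hab hπ => ?_⟩
    · rw [net_append, Perm.coe_mul, hnet, hnet', positions]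
    · rcases Nat.lt_succ_iff_lt_or_eq.1 ht with ht | rfl
      · exact (hmet t ht a b hab hπ).append_right l'
      · rw [← hnet] at hπ
        refine Met.append_left l (hπ ▸ hmet' _ ?_)
        rw [hπ]
        exact (net l).injective.ne hab.symm

theorem AC_le_of_realizable {k n : ℕ} {π : ℕ → Perm V}
    (h : ∀ t < n, RealizableIn G Set.univ k (π t))
    (hπ : ∀ a b, a ≠ b → ∃ t < n, π t (positions π t a) = positions π t b) :
    AC G ≤ k * n := by
  obtain ⟨l, hlen, hl, -, hmet⟩ := RealizableIn.exists_strategy h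
  exact hlen ▸ AC_le_length hl fun a b hab =>
    let ⟨t, ht, hswap⟩ := hπ a b hab
    hmet t ht a b hab hswap

end

/-! ### Hamiltonian paths in the cube of a graph -/

section

variable {V : Type*} {G : SimpleGraph V}

theorem edist_le_iff_exists_walk {x y : V} {r : ℕ} :
    G.edist x y ≤ r ↔ ∃ p : G.Walk x y, p.length ≤ r := by
  refine ⟨fun h => ?_, fun ⟨p, hp⟩ => (SimpleGraph.edist_le p).trans (by exact_mod_cast hp)⟩
  obtain ⟨p, hp⟩ := SimpleGraph.exists_walk_of_edist_ne_top
    (ne_top_of_le_ne_top (ENat.natCast_ne_top r) h)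
  exact ⟨p, by exact_mod_cast hp.trans_le h⟩

theorem card_edist_le [Fintype V] {D : ℕ} (hD : ∀ v, G.degree v ≤ D) (r : ℕ) (x : V) :
    (Finset.univ.filter fun y => G.edist x y ≤ r).card ≤ (D + 1) ^ r := by
  induction r generalizing x with
  | zero => simp [SimpleGraph.edist_eq_zero_iff, Finset.filter_eq]
  | succ r ih =>
    have hcover : (Finset.univ.filter fun y => G.edist x y ≤ (r + 1 : ℕ)) ⊆
        (insert x (G.neighborFinset x)).biUnion
          fun u => Finset.univ.filter fun y => G.edist u y ≤ r := by
      intro y hy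
      obtain ⟨p, hp⟩ := edist_le_iff_exists_walk.1 (Finset.mem_filter.1 hy).2
      simp only [Finset.mem_biUnion, Finset.mem_filter_univ, edist_le_iff_exists_walk]
      cases p with
      | nil => exact ⟨x, Finset.mem_insert_self _ _, .nil, Nat.zero_le r⟩
      | @cons _ u _ h p => exact ⟨u, by simp [h], p, Nat.succ_le_succ_iff.1 hp⟩
    calc _ ≤ (insert x (G.neighborFinset x)).card * (D + 1) ^ r :=
          (Finset.card_le_card hcover).trans (Finset.card_biUnion_le_card_mul _ _ _ fun u _ => ih u)
      _ ≤ (D + 1) * (D + 1) ^ r := by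
          gcongr
          exact (Finset.card_insert_le _ _).trans (by simpa using hD x)
      _ = (D + 1) ^ (r + 1) := (pow_succ' _ _).symm

/-- `x` can be reached from `v` by a walk of `G` whose vertices after the first lie in `S`. -/
def ReachesWithin (G : SimpleGraph V) (S : Finset V) (v x : V) : Prop :=
  Relation.ReflTransGen (fun a b => G.Adj a b ∧ b ∈ S) v x

/-- A Hamiltonian path of the cube of `G`, on the vertices of `l`, that starts at `v` and ends at
`v` or at a neighbour of `v`; the last condition is what makes such paths compose. -/
structure IsTour (G : SimpleGraph V) (v : V) (l : List V) : Prop where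
  head : l.head? = some v
  last : ∀ w ∈ l.getLast?, G.edist w v ≤ 1
  nodup : l.Nodup
  chain : l.IsChain fun x y => G.edist x y ≤ 3

theorem IsTour.append_reverse {v u : V} {l l' : List V} (h : IsTour G v l) (h' : IsTour G u l')
    (hvu : G.Adj v u) (hdisj : l.Disjoint l') : IsTour G v (l ++ l'.reverse) where
  head := by simp [List.head?_append, h.head]
  last := by
    have hadj : G.edist u v = 1 := SimpleGraph.edist_eq_one_iff_adj.2 hvu.symm
    simp [List.getLast?_append, h'.head, hadj]
  nodup := by
    simpa [List.nodup_append', h.nodup, h'.nodup] using hdisj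
  chain := by
    refine List.isChain_append.2 ⟨h.chain, ?_, fun x hx y hy => ?_⟩
    · simpa only [List.isChain_reverse, Function.swap_def, SimpleGraph.edist_comm] using h'.chain
    · rw [List.head?_reverse] at hy
      have hadj : G.edist v u ≤ 1 := (SimpleGraph.edist_eq_one_iff_adj.2 hvu).le
      calc G.edist x y ≤ G.edist x v + (G.edist v u + G.edist u y) :=
            SimpleGraph.edist_triangle.trans (by gcongr; exact SimpleGraph.edist_triangle)
        _ ≤ 1 + (1 + 1) := by
            gcongr
            · exact h.last x hx
            · exact SimpleGraph.edist_comm.trans_le (h'.last y hy)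
        _ = 3 := by norm_num

theorem exists_reachesWithin_sdiff {S : Finset V} {v u : V} (hu : u ∈ S) (hne : u ≠ v)
    (hS : ∀ x ∈ S, ReachesWithin G S v x) :
    ∃ B ⊆ S, u ∈ B ∧ v ∉ B ∧ (∀ x ∈ B, ReachesWithin G B u x) ∧
      ∀ x ∈ S \ B, ReachesWithin G (S \ B) v x := by
  set B := S.filter (ReachesWithin G (S.erase v) u)
  have huB : u ∈ B := Finset.mem_filter.2 ⟨hu, .refl⟩
  have hclosed : ∀ x ∈ B, ∀ y ∈ S, y ≠ v → G.Adj x y → y ∈ B := fun x hx y hy hyv hxy =>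
    Finset.mem_filter.2 ⟨hy, (Finset.mem_filter.1 hx).2.tail ⟨hxy, Finset.mem_erase.2 ⟨hyv, hy⟩⟩⟩
  refine ⟨B, Finset.filter_subset _ S, huB, fun hmem => ?_, fun x hx => ?_, fun x hx => ?_⟩
  · obtain heq | ⟨w, -, hwv⟩ := (Finset.mem_filter.1 hmem).2.cases_tail
    · exact hne heq.symm
    · exact Finset.notMem_erase v S hwv.2
  · have hreach := (Finset.mem_filter.1 hx).2
    suffices x ∈ B ∧ ReachesWithin G B u x from this.2
    clear hx
    induction hreach with
    | refl => exact ⟨huB, .refl⟩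
    | tail _ hstep ih =>
      have hmem := hclosed _ ih.1 _ (Finset.mem_of_mem_erase hstep.2)
        (Finset.ne_of_mem_erase hstep.2) hstep.1
      exact ⟨hmem, ih.2.tail ⟨hstep.1, hmem⟩⟩
  · have hreach := hS x (Finset.mem_sdiff.1 hx).1
    refine Or.resolve_left (?_ : x ∈ B ∨ _) (Finset.mem_sdiff.1 hx).2
    clear hx
    induction hreach with
    | refl => exact Or.inr .refl
    | @tail x y _ hstep ih =>
      by_cases hy : y = v
      · exact Or.inr (hy ▸ .refl)
      · exact or_iff_not_imp_left.2 fun hyB => (ih.resolve_left fun hxB =>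
          hyB (hclosed x hxB y hstep.2 hy hstep.1)).tail
            ⟨hstep.1, Finset.mem_sdiff.2 ⟨hstep.2, hyB⟩⟩

theorem exists_isTour (S : Finset V) {v : V} (hv : v ∈ S) (hS : ∀ x ∈ S, ReachesWithin G S v x) :
    ∃ l, IsTour G v l ∧ ∀ x, x ∈ l ↔ x ∈ S := by
  induction S using Finset.strongInduction generalizing v with
  | H S ih =>
    by_cases hu : ∃ u ∈ S, G.Adj v u
    · obtain ⟨u, hu, hvu⟩ := hu
      obtain ⟨B, hBS, huB, hvB, hreachB, hreach⟩ := exists_reachesWithin_sdiff hu hvu.ne' hS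
      obtain ⟨l, hl, hlmem⟩ := ih (S \ B) (Finset.sdiff_ssubset hBS ⟨u, huB⟩)
        (Finset.mem_sdiff.2 ⟨hv, hvB⟩) hreach
      obtain ⟨l', hl', hlmem'⟩ := ih B (hBS.ssubset_of_mem_notMem hv hvB) huB hreachB
      refine ⟨l ++ l'.reverse, hl.append_reverse hl' hvu fun x hx hx' => ?_, fun x => ?_⟩
      · exact (Finset.mem_sdiff.1 ((hlmem x).1 hx)).2 ((hlmem' x).1 hx')
      · rw [List.mem_append, List.mem_reverse, hlmem, hlmem', ← Finset.mem_union,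
          Finset.sdiff_union_of_subset hBS]
    · refine ⟨[v], ⟨rfl, by simp, List.nodup_singleton v, List.isChain_singleton v⟩, fun x => ?_⟩
      rw [List.mem_singleton]
      refine ⟨fun h => h ▸ hv, fun hx => ?_⟩
      obtain heq | ⟨w, hvw, -⟩ := (hS x hx).cases_head
      · exact heq.symm
      · exact absurd ⟨w, hvw.2, hvw.1⟩ hu

theorem exists_isTour_univ [Finite V] (hG : G.Connected) :
    ∃ v l, IsTour G v l ∧ ∀ x, x ∈ l := by
  cases nonempty_fintype V
  obtain ⟨v⟩ := hG.nonempty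
  obtain ⟨l, hl, hmem⟩ := exists_isTour Finset.univ (Finset.mem_univ v) fun x _ => by
    simpa [ReachesWithin] using G.reachable_iff_reflTransGen v x |>.1 (hG v x)
  exact ⟨v, l, hl, fun x => (hmem x).2 (Finset.mem_univ x)⟩

end

/-! ### Odd–even transposition -/

section

/-- Odd–even transposition sort on the positions `0, …, n - 1`: round `t` exchanges `i` and
`i + 1` whenever `i ≡ t` modulo `2`. -/
def oddEven (n t i : ℕ) : ℕ :=
  if i % 2 = t % 2 ∧ i + 1 < n then i + 1
  else if i ≠ 0 ∧ (i - 1) % 2 = t % 2 then i - 1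
  else i

/-- The positions `i` that round `t` of odd–even transposition exchanges with `i + 1`. -/
def oddEvenPairs (n t : ℕ) : Finset ℕ :=
  (Finset.range n).filter fun i => i % 2 = t % 2 ∧ i + 1 < n

theorem mem_oddEvenPairs {n t i : ℕ} : i ∈ oddEvenPairs n t ↔ i % 2 = t % 2 ∧ i + 1 < n := by
  rw [oddEvenPairs, Finset.mem_filter, Finset.mem_range]
  omega

/-- The trajectory of an agent under odd–even transposition: up to the end of the path, one
round of rest, down to its start, one round of rest, and up again. The agent with coordinate
`x < n` starts at `zigzag n (2 * x)` and is at `zigzag n (2 * x + t)` after `t` rounds. -/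
def zigzag (n s : ℕ) : ℕ :=
  if s < n then s else if s < 2 * n then 2 * n - 1 - s else s - 2 * n

theorem zigzag_lt {n s : ℕ} (hs : s < 3 * n) : zigzag n s < n := by
  unfold zigzag
  split_ifs <;> omega

theorem exists_zigzag_eq {n i : ℕ} (hi : i < n) : ∃ x < n, zigzag n (2 * x) = i := by
  obtain ⟨k, rfl | rfl⟩ := Nat.even_or_odd' i
  · exact ⟨k, by omega, by unfold zigzag; split_ifs; omega⟩
  · exact ⟨n - 1 - k, by omega, by unfold zigzag; split_ifs <;> omega⟩

theorem oddEven_zigzag {n t x : ℕ} (ht : t < n) (hx : x < n) :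
    oddEven n t (zigzag n (2 * x + t)) = zigzag n (2 * x + (t + 1)) := by
  unfold oddEven zigzag
  split_ifs <;> omega

theorem exists_oddEven_zigzag_eq {n x y : ℕ} (hx : x < n) (hy : y < n) :
    ∃ t < n, oddEven n t (zigzag n (2 * x + t)) = zigzag n (2 * y + t) := by
  by_cases h : n ≤ x + y
  · refine ⟨2 * n - 1 - x - y, by omega, ?_⟩
    unfold oddEven zigzag
    split_ifs <;> omega
  · refine ⟨n - 1 - x - y, by omega, ?_⟩
    unfold oddEven zigzag
    split_ifs <;> omega

variable {V : Type*} {G : SimpleGraph V}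

theorem RealizableIn.swap_of_edist_le {x y : V} {r : ℕ} (hxy : x ≠ y) (h : G.edist x y ≤ r) :
    RealizableIn G {z | G.edist x z ≤ r} (2 * r - 1) (swap x y) := by
  obtain ⟨p, hp⟩ := edist_le_iff_exists_walk.1 h
  refine (swap_of_walk p hxy (by omega)).mono fun z hz => ?_
  exact edist_le_iff_exists_walk.2 ⟨p.takeUntil z hz, (p.length_takeUntil_le_length hz).trans hp⟩

section OddEvenRound

variable {D n : ℕ} {v : ℕ → V}

theorem pairwise_disjoint_swap_oddEvenPairs (hv : Set.InjOn v (Set.Iio n)) (t : ℕ) :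
    (oddEvenPairs n t : Set ℕ).Pairwise fun i j =>
      (swap (v i) (v (i + 1))).Disjoint (swap (v j) (v (j + 1))) := by
  intro i hi j hj hij
  rw [Finset.mem_coe, mem_oddEvenPairs] at hi hj
  have hne : ∀ {a b : ℕ}, a < n → b < n → a ≠ b → v a ≠ v b := fun ha hb => hv.ne ha hb
  refine Perm.disjoint_swap_swap ?_
  simp only [List.nodup_cons, List.mem_cons, List.not_mem_nil, or_false, not_or,
    not_false_eq_true, List.nodup_nil, and_true]
  refine ⟨⟨?_, ?_, ?_⟩, ⟨?_, ?_⟩, ?_⟩ <;> exact hne (by omega) (by omega) (by omega)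

theorem noncommProd_swap_oddEvenPairs_apply (hv : Set.InjOn v (Set.Iio n)) {t i : ℕ} (hi : i < n)
    (comm) : (oddEvenPairs n t).noncommProd (fun i => swap (v i) (v (i + 1))) comm (v i)
      = v (oddEven n t i) := by
  have hdisj := pairwise_disjoint_swap_oddEvenPairs hv t
  have hne : ∀ {a b : ℕ}, a < n → b < n → a ≠ b → v a ≠ v b := fun ha hb => hv.ne ha hb
  unfold oddEven
  split_ifs with hup hdown
  · rw [noncommProd_apply_of_apply_ne hdisj comm (mem_oddEvenPairs.2 hup)] <;>
      rw [swap_apply_left]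
    exact hne hup.2 hi (by omega)
  · obtain ⟨j, rfl⟩ := Nat.exists_eq_add_one_of_ne_zero hdown.1
    rw [Nat.add_sub_cancel] at *
    rw [noncommProd_apply_of_apply_ne hdisj comm (mem_oddEvenPairs.2 ⟨hdown.2, hi⟩)] <;>
      rw [swap_apply_right]
    exact hne (by omega) hi (by omega)
  · refine noncommProd_apply_of_forall_apply_eq comm fun j hj => ?_
    rw [mem_oddEvenPairs] at hj
    exact swap_apply_of_ne_of_ne (hne hi (by omega) (by omega)) (hne hi (by omega) (by omega))

variable [Fintype V]

theorem card_conflict_lt (hD : ∀ x, G.degree x ≤ D) (r : ℕ) {I : Finset ℕ}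
    (hv : Set.InjOn v I) {i : ℕ} (hi : i ∈ I) :
    (I.filter ((conflictGraph fun i => {z | G.edist (v i) z ≤ r}).Adj i)).card
      < (D + 1) ^ (r + r) := by
  have hsub : (I.filter ((conflictGraph fun i => {z | G.edist (v i) z ≤ r}).Adj i)).image v ⊆
      (Finset.univ.filter fun y => G.edist (v i) y ≤ (r + r : ℕ)).erase (v i) := by
    simp only [Finset.subset_iff, Finset.mem_image, Finset.mem_filter]
    rintro _ ⟨j, ⟨hj, hne, hmeet⟩, rfl⟩
    obtain ⟨z, hiz, hjz⟩ := Set.not_disjoint_iff.1 hmeet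
    refine Finset.mem_erase.2 ⟨fun h => hne (hv hi hj h.symm), Finset.mem_filter_univ _ |>.2 ?_⟩
    calc G.edist (v i) (v j) ≤ G.edist (v i) z + G.edist z (v j) := SimpleGraph.edist_triangle
      _ ≤ r + r := add_le_add hiz (SimpleGraph.edist_comm.trans_le hjz)
      _ = (r + r : ℕ) := by push_cast; rfl
  rw [← Finset.card_image_of_injOn (hv.mono (Finset.coe_subset.2 (Finset.filter_subset _ I)))]
  refine ((Finset.card_le_card hsub).trans_lt (Finset.card_erase_lt_of_mem ?_)).trans_le
    (card_edist_le hD (r + r) (v i))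
  simp

theorem exists_realizableIn_oddEven (hD : ∀ x, G.degree x ≤ D) (hv : Set.InjOn v (Set.Iio n))
    {r : ℕ} (hchain : ∀ i, i + 1 < n → G.edist (v i) (v (i + 1)) ≤ r) (t : ℕ) :
    ∃ π : Perm V, RealizableIn G Set.univ ((2 * r - 1) * (D + 1) ^ (r + r)) π ∧
      ∀ i < n, π (v i) = v (oddEven n t i) := by
  have hdisj := pairwise_disjoint_swap_oddEvenPairs hv t
  have hlt : ∀ i ∈ oddEvenPairs n t, i + 1 < n := fun i hi => (mem_oddEvenPairs.1 hi).2
  refine ⟨_, .noncommProd_of_conflict_lt (W := fun i => {z | G.edist (v i) z ≤ r}) hdisj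
    (fun i hi => card_conflict_lt hD r (hv.mono fun j hj => ?_) hi) (fun i hi => ?_)
    (hdisj.imp fun _ _ h => h.commute), fun i hi => noncommProd_swap_oddEvenPairs_apply hv hi _⟩
  · exact (Nat.lt_succ_self j).trans (hlt j hj)
  · exact .swap_of_edist_le (hv.ne (Nat.lt_of_succ_lt (hlt i hi)) (hlt i hi) (by omega))
      (hchain i (hlt i hi))

end OddEvenRound

theorem AC_le_of_degree_le [Fintype V] (hG : G.Connected) {D : ℕ} (hD : ∀ x, G.degree x ≤ D) :
    AC G ≤ 5 * (D + 1) ^ 6 * Fintype.card V := by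
  obtain ⟨v₀, l, hl, hmem⟩ := exists_isTour_univ hG
  set v : ℕ → V := fun i => l.getD i v₀
  have hget : ∀ i (hi : i < l.length), v i = l[i] := fun i hi => List.getD_eq_getElem l v₀ hi
  have hinj : Set.InjOn v (Set.Iio l.length) := fun i hi j hj h => by
    rw [hget i hi, hget j hj] at h
    exact (hl.nodup.getElem_inj_iff).1 h
  have hchain : ∀ i, i + 1 < l.length → G.edist (v i) (v (i + 1)) ≤ (3 : ℕ) := fun i hi => by
    rw [hget i (by omega), hget _ hi]
    exact List.isChain_iff_getElem.1 hl.chain i hi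
  choose π hπ hstep using exists_realizableIn_oddEven hD hinj hchain
  have hpos : ∀ x < l.length, ∀ t ≤ l.length,
      positions π t (v (zigzag l.length (2 * x))) = v (zigzag l.length (2 * x + t)) := by
    intro x hx t ht
    induction t with
    | zero => rfl
    | succ t ih =>
      rw [positions, Function.comp_apply, ih (by omega), hstep t _ (zigzag_lt (by omega)),
        oddEven_zigzag (by omega) hx]
  have hcoord : ∀ a, ∃ x < l.length, v (zigzag l.length (2 * x)) = a := fun a => by
    obtain ⟨i, hi, rfl⟩ := List.mem_iff_getElem.1 (hmem a)
    obtain ⟨x, hx, hxi⟩ := exists_zigzag_eq hi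
    exact ⟨x, hx, hxi ▸ hget i hi⟩
  calc AC G ≤ 5 * (D + 1) ^ 6 * l.length := by
        refine AC_le_of_realizable (fun t _ => hπ t) fun a b _ => ?_
        obtain ⟨x, hx, rfl⟩ := hcoord a
        obtain ⟨y, hy, rfl⟩ := hcoord b
        obtain ⟨t, ht, hmeet⟩ := exists_oddEven_zigzag_eq hx hy
        refine ⟨t, ht, ?_⟩
        rw [hpos x hx t ht.le, hpos y hy t ht.le, hstep t _ (zigzag_lt (by omega)), hmeet]
    _ ≤ 5 * (D + 1) ^ 6 * Fintype.card V := by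
        gcongr
        exact hl.nodup.length_le_card

end

/-! ### Travelling to a vertex -/

section

theorem exists_rank {α : Type*} (S : Finset α) (e : α → ℕ) :
    ∃ ρ : α → ℕ, Set.InjOn ρ S ∧ (∀ a ∈ S, ρ a < S.card) ∧
      ∀ a ∈ S, ∀ b ∈ S, ρ a < ρ b → e a ≤ e b := by
  induction S using Finset.induction_on_max_value e with
  | empty => exact ⟨0, by simp, by simp, by simp⟩
  | insert a S ha hmax ih =>
    obtain ⟨ρ, hinj, hlt, hmono⟩ := ih
    have hne : ∀ b ∈ S, b ≠ a := fun b hb => ne_of_mem_of_not_mem hb ha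
    have hS : ∀ b ∈ S, Function.update ρ a S.card b = ρ b := fun b hb =>
      Function.update_of_ne (hne b hb) _ _
    refine ⟨Function.update ρ a S.card, ?_, ?_, ?_⟩
    · rw [Finset.coe_insert, Set.injOn_insert (by simpa using ha), Function.update_self]
      refine ⟨fun b hb c hc => ?_, ?_⟩
      · rw [hS b hb, hS c hc]
        exact hinj hb hc
      · rintro ⟨b, hb, hbS⟩
        rw [hS b hb] at hbS
        exact (hlt b hb).ne hbS
    · rw [Finset.card_insert_of_notMem ha, Finset.forall_mem_insert, Function.update_self]
      exact ⟨Nat.lt_succ_self _, fun b hb => hS b hb ▸ Nat.lt_succ_of_lt (hlt b hb)⟩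
    · simp only [Finset.forall_mem_insert, Function.update_self]
      refine ⟨⟨fun _ => le_rfl, fun b hb h => ?_⟩,
        fun b hb => ⟨fun _ => hmax b hb, fun c hc h => ?_⟩⟩
      · rw [hS b hb] at h
        exact absurd h (hlt b hb).not_gt
      · rw [hS b hb, hS c hc] at h
        exact hmono b hb c hc h

variable {V : Type*} {G : SimpleGraph V} {r : V}

/-- The distance from `z` to the closed neighbourhood of `r`; the truncated subtraction gives
`r` and its neighbours the same depth `0`. -/
noncomputable def depth (G : SimpleGraph V) (r z : V) : ℕ := G.dist r z - 1

@[simp]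
theorem depth_self : depth G r r = 0 := by simp [depth]

theorem eq_of_depth_eq_zero (hG : G.Connected) {v : V} (hv : ¬G.Adj r v) (h : depth G r v = 0) :
    v = r := by
  by_contra hne
  have hlt := hG.one_lt_dist_of_ne_of_not_adj (Ne.symm hne) hv
  unfold depth at h
  omega

theorem depth_lt_card [Fintype V] (hG : G.Connected) (v : V) : depth G r v < Fintype.card V := by
  obtain ⟨p, hp, hlen⟩ := hG.exists_path_of_dist r v
  exact (Nat.sub_le _ _).trans_lt (hlen ▸ hp.length_lt)

/-- The vertices at the depth of `v` or one less. -/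
def band (G : SimpleGraph V) (r v : V) : Set V :=
  {z | depth G r z = depth G r v ∨ depth G r z + 1 = depth G r v}

/-- `q` is a choice, for every vertex outside the closed neighbourhood of `r`, of a next vertex on
the way to `r` that avoids the neighbours of `r`: an agent at depth `1` hops over a neighbour of
`r` straight to `r`. A hop takes three rounds and only disturbs the two depths it joins. -/
def IsClimb (G : SimpleGraph V) (r : V) (q : V → V) : Prop :=
  ∀ v, ¬G.Adj r v → 0 < depth G r v →
    ¬G.Adj r (q v) ∧ depth G r (q v) + 1 = depth G r v ∧
      RealizableIn G (band G r v) 3 (swap v (q v))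

theorem exists_adj_dist_add_one (hG : G.Connected) {v : V} (hv : v ≠ r) :
    ∃ u, G.Adj v u ∧ G.dist r u + 1 = G.dist r v := by
  obtain ⟨p, hp⟩ := hG.exists_walk_length_eq_dist v r
  cases p with
  | nil => exact absurd rfl hv
  | @cons _ u _ hvu p =>
    refine ⟨u, hvu, ?_⟩
    have hle : G.dist r u ≤ p.length := SimpleGraph.dist_comm.trans_le (SimpleGraph.dist_le p)
    have htri := hG.dist_triangle (u := r) (v := u) (w := v)
    rw [SimpleGraph.dist_eq_one_iff_adj.2 hvu.symm] at htri
    rw [SimpleGraph.Walk.length_cons, SimpleGraph.dist_comm] at hp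
    omega

theorem exists_isClimb (hG : G.Connected) (r : V) : ∃ q, IsClimb G r q := by
  suffices ∀ v, ∃ u, ¬G.Adj r v → 0 < depth G r v → ¬G.Adj r u ∧ depth G r u + 1 = depth G r v ∧
      RealizableIn G (band G r v) 3 (swap v u) by
    choose q hq using this
    exact ⟨q, hq⟩
  intro v
  by_cases hne : v = r
  · exact ⟨r, fun _ hpos => absurd hpos (by simp [hne])⟩
  obtain ⟨u, hvu, hdist⟩ := exists_adj_dist_add_one hG hne
  by_cases hru : G.Adj r u
  · refine ⟨r, fun _ _ => ⟨G.loopless.irrefl r, ?_, ?_⟩⟩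
    all_goals rw [SimpleGraph.dist_eq_one_iff_adj.2 hru] at hdist
    · simp [depth, ← hdist]
    · refine (RealizableIn.swap_of_walk (.cons hvu (.cons hru.symm .nil)) hne (by simp)).mono ?_
      simp [band, depth, ← hdist, SimpleGraph.dist_eq_one_iff_adj.2 hru]
  · refine ⟨u, fun _ hpos => ⟨hru, ?_⟩⟩
    have hstep : depth G r u + 1 = depth G r v := by
      have hne : G.dist r u ≠ 1 := mt SimpleGraph.dist_eq_one_iff_adj.1 hru
      unfold depth at *
      omega
    refine ⟨hstep, (RealizableIn.swap_of_walk (.cons hvu .nil) hvu.ne (by simp)).mono ?_⟩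
    simp [band, hstep]

theorem IsClimb.iterate {q : V → V} (hq : IsClimb G r q) {v : V} (hv : ¬G.Adj r v) {k : ℕ}
    (hk : k ≤ depth G r v) :
    ¬G.Adj r (q^[k] v) ∧ depth G r (q^[k] v) + k = depth G r v := by
  induction k with
  | zero => exact ⟨hv, rfl⟩
  | succ k ih =>
    obtain ⟨hadj, hdepth⟩ := ih (by omega)
    obtain ⟨hadj', hdepth', -⟩ := hq _ hadj (by omega)
    rw [Function.iterate_succ_apply']
    exact ⟨hadj', by omega⟩

end

/-! ### Processions to a vertex of high degree -/

section

variable {V : Type*} {G : SimpleGraph V} {r : V} {S : Finset V} {ρ : V → ℕ} {q w : V → V}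

/-- A departure order for the agents of `S`, all starting outside the neighbourhood of `r`: the
agent with the `i`-th smallest depth gets the number `ρ a = i`, and leaves after `2 * ρ a` ticks. -/
structure IsSchedule (G : SimpleGraph V) (r : V) (S : Finset V) (ρ : V → ℕ) : Prop where
  not_adj : ∀ a ∈ S, ¬G.Adj r a
  injOn : Set.InjOn ρ S
  lt_card : ∀ a ∈ S, ρ a < S.card
  depth_le : ∀ a ∈ S, ∀ b ∈ S, ρ a < ρ b → depth G r a ≤ depth G r b

/-- The tick at which the agent starting at `a` reaches `r`. -/
noncomputable def arrival (G : SimpleGraph V) (r : V) (ρ : V → ℕ) (a : V) : ℕ :=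
  depth G r a + 2 * ρ a

/-- The position at tick `t` of the agent starting at `a`, which follows `q` from tick `2 * ρ a`
on; until then the truncated subtraction makes it wait. -/
def enRoute (q : V → V) (ρ : V → ℕ) (t : ℕ) (a : V) : V := q^[t - 2 * ρ a] a

/-- The agents of `S` that have left their starting positions but not yet reached `r`. -/
noncomputable def movers (G : SimpleGraph V) (r : V) (S : Finset V) (ρ : V → ℕ) (t : ℕ) :
    Finset V :=
  S.filter fun a => 2 * ρ a ≤ t ∧ t < arrival G r ρ a

/-- The exchange by which the agent starting at `a` makes its hop at tick `t`. -/
noncomputable def hop (q : V → V) (ρ : V → ℕ) (t : ℕ) (a : V) : Perm V :=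
  swap (enRoute q ρ t a) (q (enRoute q ρ t a))

theorem exists_isSchedule (h : ∀ a ∈ S, ¬G.Adj r a) : ∃ ρ, IsSchedule G r S ρ :=
  let ⟨ρ, hinj, hlt, hmono⟩ := exists_rank S (depth G r)
  ⟨ρ, h, hinj, hlt, hmono⟩

namespace IsSchedule

theorem arrival_add_two_le (hS : IsSchedule G r S ρ) {a b : V} (ha : a ∈ S) (hb : b ∈ S)
    (h : ρ a < ρ b) : arrival G r ρ a + 2 ≤ arrival G r ρ b := by
  have := hS.depth_le a ha b hb h
  unfold arrival
  omega

theorem arrival_injOn (hS : IsSchedule G r S ρ) : Set.InjOn (arrival G r ρ) S := by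
  intro a ha b hb h
  by_contra hab
  rcases lt_or_gt_of_ne (hS.injOn.ne ha hb hab) with hlt | hlt
  · exact absurd (hS.arrival_add_two_le ha hb hlt) (by omega)
  · exact absurd (hS.arrival_add_two_le hb ha hlt) (by omega)

theorem arrival_lt [Fintype V] (hS : IsSchedule G r S ρ) (hG : G.Connected) {a : V} (ha : a ∈ S) :
    arrival G r ρ a < 3 * Fintype.card V := by
  have hdepth : depth G r a < _ := depth_lt_card hG a
  have hρ := (hS.lt_card a ha).trans_le S.card_le_univ
  unfold arrival
  omega

variable {t : ℕ} {a : V}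

theorem not_adj_enRoute (hS : IsSchedule G r S ρ) (hq : IsClimb G r q) (ha : a ∈ S)
    (ht : t ≤ arrival G r ρ a) : ¬G.Adj r (enRoute q ρ t a) :=
  (hq.iterate (hS.not_adj a ha) (by unfold arrival at ht; omega)).1

theorem depth_enRoute (hS : IsSchedule G r S ρ) (hq : IsClimb G r q) (ha : a ∈ S)
    (ht : t ≤ arrival G r ρ a) :
    depth G r (enRoute q ρ t a) + (t - 2 * ρ a) = depth G r a :=
  (hq.iterate (hS.not_adj a ha) (by unfold arrival at ht; omega)).2

theorem enRoute_arrival (hS : IsSchedule G r S ρ) (hq : IsClimb G r q) (hG : G.Connected)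
    (ha : a ∈ S) : enRoute q ρ (arrival G r ρ a) a = r := by
  refine eq_of_depth_eq_zero hG (hS.not_adj_enRoute hq ha le_rfl) ?_
  have := hS.depth_enRoute hq ha le_rfl
  unfold arrival at this ⊢
  omega

theorem enRoute_ne (hS : IsSchedule G r S ρ) (hq : IsClimb G r q) (hG : G.Connected)
    (ha : a ∈ S) {b : V} (hb : b ∈ S) (h : arrival G r ρ b < arrival G r ρ a) :
    enRoute q ρ (arrival G r ρ b) a ≠ r := by
  intro hr
  have hab : a ≠ b := by rintro rfl; exact h.false
  have hρ : ρ b < ρ a := (hS.injOn.ne hb ha hab.symm).lt_of_le <| not_lt.1 fun hlt =>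
    absurd (hS.arrival_add_two_le ha hb hlt) (by omega)
  have hle := hS.depth_le b hb a ha hρ
  have hdepth := hS.depth_enRoute hq ha h.le
  rw [hr, depth_self] at hdepth
  unfold arrival at h hdepth
  exact hab ((eq_of_depth_eq_zero hG (hS.not_adj a ha) (by omega)).trans
    (eq_of_depth_eq_zero hG (hS.not_adj b hb) (by omega)).symm)

theorem isClimb_enRoute (hS : IsSchedule G r S ρ) (hq : IsClimb G r q)
    (ha : a ∈ movers G r S ρ t) :
    ¬G.Adj r (enRoute q ρ t a) ∧ ¬G.Adj r (q (enRoute q ρ t a)) ∧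
      depth G r (q (enRoute q ρ t a)) + 1 = depth G r (enRoute q ρ t a) ∧
      RealizableIn G (band G r (enRoute q ρ t a)) 3 (hop q ρ t a) := by
  obtain ⟨haS, hat, harr⟩ := Finset.mem_filter.1 ha
  have hadj := hS.not_adj_enRoute hq haS harr.le
  have hdepth := hS.depth_enRoute hq haS harr.le
  exact ⟨hadj, hq _ hadj (by unfold arrival at harr; omega)⟩

-- Distinct travellers are at least two depths apart, so the bands their hops disturb are disjoint.
theorem pairwiseDisjoint_bands (hS : IsSchedule G r S ρ) (hq : IsClimb G r q) (t : ℕ) :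
    (movers G r S ρ t : Set V).PairwiseDisjoint fun a => band G r (enRoute q ρ t a) := by
  intro a ha b hb hab
  obtain ⟨haS, ha⟩ := Finset.mem_filter.1 (Finset.mem_coe.1 ha)
  obtain ⟨hbS, hb⟩ := Finset.mem_filter.1 (Finset.mem_coe.1 hb)
  have hda := hS.depth_enRoute hq haS ha.2.le
  have hdb := hS.depth_enRoute hq hbS hb.2.le
  have hgap : arrival G r ρ a + 2 ≤ arrival G r ρ b ∨ arrival G r ρ b + 2 ≤ arrival G r ρ a :=
    (lt_or_gt_of_ne (hS.injOn.ne haS hbS hab)).imp (hS.arrival_add_two_le haS hbS)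
      (hS.arrival_add_two_le hbS haS)
  refine Set.disjoint_left.2 fun z hza hzb => ?_
  simp only [band, Set.mem_ofPred_eq] at hza hzb
  unfold arrival at *
  omega

theorem pairwise_disjoint_hop (hS : IsSchedule G r S ρ) (hq : IsClimb G r q) (t : ℕ) :
    (movers G r S ρ t : Set V).Pairwise fun a b => (hop q ρ t a).Disjoint (hop q ρ t b) :=
  fun _ ha _ hb hab => (hS.isClimb_enRoute hq ha).2.2.2.supportedOn.disjoint
    (hS.isClimb_enRoute hq hb).2.2.2.supportedOn (hS.pairwiseDisjoint_bands hq t ha hb hab)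

theorem hop_apply_of_adj (hS : IsSchedule G r S ρ) (hq : IsClimb G r q)
    (ha : a ∈ movers G r S ρ t) {x : V} (hx : G.Adj r x) : hop q ρ t a x = x := by
  obtain ⟨hadj, hadj', -⟩ := hS.isClimb_enRoute hq ha
  exact swap_apply_of_ne_of_ne (fun h => hadj (h ▸ hx)) fun h => hadj' (h ▸ hx)

theorem hop_apply_of_waiting (hS : IsSchedule G r S ρ) (hq : IsClimb G r q) (ha : a ∈ S)
    (hwait : t < 2 * ρ a) {b : V} (hb : b ∈ movers G r S ρ t) : hop q ρ t b a = a := by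
  obtain ⟨hbS, hbt, hbarr⟩ := Finset.mem_filter.1 hb
  have hdepth := hS.depth_enRoute hq hbS hbarr.le
  have hle := hS.depth_le b hbS a ha (by omega)
  have hnext := (hS.isClimb_enRoute hq hb).2.2.1
  refine swap_apply_of_ne_of_ne (fun h => ?_) fun h => ?_
  · rw [← h] at hdepth
    have hstart : t - 2 * ρ b = 0 := by omega
    rw [enRoute, hstart, Function.iterate_zero_apply] at h
    subst h
    omega
  · rw [← h] at hnext
    omega

theorem exists_phase (hS : IsSchedule G r S ρ) (hq : IsClimb G r q) (t : ℕ) :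
    ∃ π : Perm V, RealizableIn G Set.univ 3 π ∧ (∀ x, G.Adj r x → π x = x) ∧
      ∀ a ∈ S, t < arrival G r ρ a → π (enRoute q ρ t a) = enRoute q ρ (t + 1) a := by
  have hdisj := hS.pairwise_disjoint_hop hq t
  refine ⟨_, (RealizableIn.noncommProd (hS.pairwiseDisjoint_bands hq t)
    (fun a ha => (hS.isClimb_enRoute hq ha).2.2.2) (hdisj.imp fun _ _ h => h.commute)).mono
    (Set.subset_univ _), fun x hx => ?_, fun a ha hat => ?_⟩
  · exact noncommProd_apply_of_forall_apply_eq _ fun a ha => hS.hop_apply_of_adj hq ha hx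
  rcases le_or_gt (2 * ρ a) t with hleft | hwait
  · have hmem : a ∈ movers G r S ρ t := Finset.mem_filter.2 ⟨ha, hleft, hat⟩
    have hnext : hop q ρ t a (enRoute q ρ t a) = enRoute q ρ (t + 1) a := by
      rw [hop, swap_apply_left, enRoute, enRoute, Nat.sub_add_comm hleft,
        Function.iterate_succ_apply']
    rw [noncommProd_apply_of_apply_ne hdisj _ hmem, hnext]
    rw [hop, swap_apply_left]
    intro h
    have hdepth := (hS.isClimb_enRoute hq hmem).2.2.1
    rw [h] at hdepth
    omega
  · have hrest : ∀ s ≤ 2 * ρ a, enRoute q ρ s a = a := fun s hs => by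
      rw [enRoute, Nat.sub_eq_zero_of_le hs, Function.iterate_zero_apply]
    rw [hrest t hwait.le, hrest (t + 1) hwait]
    exact noncommProd_apply_of_forall_apply_eq _ fun b hb => hS.hop_apply_of_waiting hq ha hwait hb

theorem exists_seating (hS : IsSchedule G r S ρ) (hq : IsClimb G r q) (hG : G.Connected)
    (hw : ∀ a ∈ S, w a = r ∨ G.Adj r (w a)) (t : ℕ) :
    ∃ γ : Perm V, IsMatchingSwap G γ ∧ (∀ a ∈ S, arrival G r ρ a = t → γ r = w a) ∧
      (∀ x, G.Adj r x → (∀ a ∈ S, arrival G r ρ a = t → w a ≠ x) → γ x = x) ∧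
      ∀ a ∈ S, t < arrival G r ρ a → γ (enRoute q ρ t a) = enRoute q ρ t a := by
  by_cases h : ∃ a ∈ S, arrival G r ρ a = t
  · obtain ⟨a, ha, rfl⟩ := h
    refine ⟨swap r (w a), isMatchingSwap_swap ((hw a ha).imp_left Eq.symm), fun b hb hab => ?_,
      fun x hx hfree => ?_, fun b hb hlt => ?_⟩
    · rw [swap_apply_left, hS.arrival_injOn hb ha hab]
    · exact swap_apply_of_ne_of_ne hx.ne' (hfree a ha rfl).symm
    · have hne := hS.enRoute_ne hq hG hb ha hlt
      refine swap_apply_of_ne_of_ne hne fun h => ?_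
      obtain heq | hadj := hw a ha
      · exact hne (h.trans heq)
      · exact hS.not_adj_enRoute hq hb hlt.le (h ▸ hadj)
  · push Not at h
    exact ⟨1, isMatchingSwap_one G, fun a ha hat => absurd hat (h a ha), fun _ _ _ => rfl,
      fun _ _ _ => rfl⟩

end IsSchedule

/-- The strategy `l` plays `T` ticks of the procession of the agents of `S` to `r`. One tick is
four rounds: first an agent `a` that has just arrived changes places with the occupant of its seat
`w a`, a neighbour of `r` or, when `a` is only meant to meet the neighbours, `r` itself; then
every travelling agent makes a hop. -/
structure IsProcession (G : SimpleGraph V) (r : V) (S : Finset V) (ρ : V → ℕ) (q w : V → V)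
    (T : ℕ) (l : List (Perm V)) : Prop where
  isStrategy : IsStrategy G l
  length_eq : l.length = 4 * T
  net_of_free : ∀ x, G.Adj r x → (∀ a ∈ S, w a ≠ x) → net l x = x
  net_of_le : ∀ a ∈ S, T ≤ arrival G r ρ a → net l a = enRoute q ρ T a
  net_of_lt : ∀ a ∈ S, arrival G r ρ a < T → G.Adj r (w a) → net l a = w a
  met : ∀ a ∈ S, arrival G r ρ a < T → ∀ x, G.Adj r x → (∀ b ∈ S, w b ≠ x) → Met G l a x

theorem IsProcession.exists_succ {T : ℕ} {l : List (Perm V)}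
    (hl : IsProcession G r S ρ q w T l) (hG : G.Connected) (hq : IsClimb G r q)
    (hS : IsSchedule G r S ρ) (hw : ∀ a ∈ S, w a = r ∨ G.Adj r (w a))
    (hseat : ∀ a ∈ S, ∀ b ∈ S, G.Adj r (w a) → w a = w b → a = b) :
    ∃ l', IsProcession G r S ρ q w (T + 1) l' := by
  obtain ⟨γ, hγ, hsit, hγfree, hγroute⟩ := hS.exists_seating hq hG hw T
  obtain ⟨-, ⟨l', hlen', hl', -, rfl, -⟩, hfix, hmove⟩ := hS.exists_phase hq T
  have hnet : ∀ v, net (l ++ [γ] ++ l') v = net l' (γ (net l v)) := fun v => by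
    rw [net_append, net_append, net_singleton, Perm.mul_apply, Perm.mul_apply]
  have harrived : ∀ a ∈ S, arrival G r ρ a = T → net l a = r := fun a ha hT => by
    rw [hl.net_of_le a ha hT.ge, ← hT, hS.enRoute_arrival hq hG ha]
  refine ⟨l ++ [γ] ++ l', (hl.isStrategy.append (by simpa [IsStrategy] using hγ)).append hl', ?_,
    fun x hx hfree => ?_, fun a ha hT => ?_, fun a ha hT hadj => ?_, fun a ha hT x hx hfree => ?_⟩
  · simp only [List.length_append, List.length_singleton, hl.length_eq, hlen']
    ring
  · rw [hnet, hl.net_of_free x hx hfree, hγfree x hx fun a ha _ => hfree a ha, hfix x hx]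
  · rw [hnet, hl.net_of_le a ha (by omega), hγroute a ha hT, hmove a ha hT]
  · rw [hnet]
    rcases Nat.lt_succ_iff_lt_or_eq.1 hT with hlt | heq
    · rw [hl.net_of_lt a ha hlt hadj, hγfree _ hadj, hfix _ hadj]
      rintro b hb rfl h
      exact hlt.ne (hseat a ha b hb hadj h.symm ▸ rfl)
    · rw [harrived a ha heq, hsit a ha heq, hfix _ hadj]
  · refine Met.append_right l' (Met.append_right [γ] ?_)
    rcases Nat.lt_succ_iff_lt_or_eq.1 hT with hlt | heq
    · exact hl.met a ha hlt x hx hfree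
    · exact met_of_adj_net (by rwa [harrived a ha heq, hl.net_of_free x hx hfree])

theorem exists_isProcession (hG : G.Connected) (hq : IsClimb G r q) (hS : IsSchedule G r S ρ)
    (hw : ∀ a ∈ S, w a = r ∨ G.Adj r (w a))
    (hseat : ∀ a ∈ S, ∀ b ∈ S, G.Adj r (w a) → w a = w b → a = b) (T : ℕ) :
    ∃ l, IsProcession G r S ρ q w T l := by
  induction T with
  | zero =>
    exact ⟨[], by simp [IsStrategy], rfl, by simp, fun a _ _ => by simp [enRoute], by simp, by simp⟩
  | succ T ih =>
    obtain ⟨l, hl⟩ := ih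
    exact hl.exists_succ hG hq hS hw hseat

theorem exists_strategy_procession [Fintype V] (hG : G.Connected) (hS : ∀ a ∈ S, ¬G.Adj r a)
    (hw : ∀ a ∈ S, w a = r ∨ G.Adj r (w a))
    (hseat : ∀ a ∈ S, ∀ b ∈ S, G.Adj r (w a) → w a = w b → a = b) :
    ∃ l, IsStrategy G l ∧ l.length = 12 * Fintype.card V ∧
      (∀ a ∈ S, G.Adj r (w a) → net l a = w a) ∧
      ∀ x, G.Adj r x → (∀ a ∈ S, w a ≠ x) → net l x = x ∧ ∀ a ∈ S, Met G l a x := by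
  obtain ⟨q, hq⟩ := exists_isClimb hG r
  obtain ⟨ρ, hρ⟩ := exists_isSchedule hS
  obtain ⟨l, hl⟩ := exists_isProcession hG hq hρ hw hseat (3 * Fintype.card V)
  exact ⟨l, hl.isStrategy, by rw [hl.length_eq]; ring,
    fun a ha => hl.net_of_lt a ha (hρ.arrival_lt hG ha), fun x hx hfree =>
      ⟨hl.net_of_free x hx hfree, fun a ha => hl.met a ha (hρ.arrival_lt hG ha) x hx hfree⟩⟩

end

/-! ### Batches -/

section

variable {V : Type*} {G : SimpleGraph V} {r : V}

theorem exists_strategy_met_in_star (L : List V) (hL : ∀ w ∈ L, G.Adj r w) :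
    ∃ l, IsStrategy G l ∧ l.length = 2 * L.length ∧ net l = 1 ∧
      ∀ w ∈ L, ∀ x, G.Adj r x → x ≠ w → Met G l w x := by
  induction L with
  | nil => exact ⟨[], by simp [IsStrategy], rfl, rfl, by simp⟩
  | cons v L ih =>
    rw [List.forall_mem_cons] at hL
    obtain ⟨l, hl, hlen, hnet, hmet⟩ := ih hL.2
    have hnet' : net [swap r v, swap r v] = 1 := by simp [net]
    refine ⟨[swap r v, swap r v] ++ l, IsStrategy.append ?_ hl, ?_, ?_, fun w hw x hx hxw => ?_⟩
    · simpa [IsStrategy] using isMatchingSwap_swap (Or.inr hL.1)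
    · simp only [List.length_append, List.length_cons, List.length_nil, hlen]
      ring
    · rw [net_append, hnet, hnet', mul_one]
    · obtain rfl | hw := List.mem_cons.1 hw
      · refine Met.append_right l (Met.append_right (l := [swap r w]) [swap r w]
          (met_of_adj_net ?_))
        rwa [net_singleton, swap_apply_right, swap_apply_of_ne_of_ne hx.ne' hxw]
      · exact Met.append_left _ (by simpa only [hnet', Perm.one_apply] using hmet w hw x hx hxw)

theorem exists_strategy_of_batches {d K : ℕ}
    (h : ∀ U : Finset V, U.card ≤ d →
      ∃ l, IsStrategy G l ∧ l.length ≤ K ∧ ∀ a ∈ U, ∀ b, b ≠ a → Met G l a b)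
    (k : ℕ) {A : Finset V} (hA : A.card ≤ k * d) :
    ∃ l, IsStrategy G l ∧ l.length ≤ K * k ∧ ∀ a ∈ A, ∀ b, b ≠ a → Met G l a b := by
  induction k generalizing A with
  | zero =>
    obtain rfl : A = ∅ := by simpa using hA
    exact ⟨[], by simp [IsStrategy], le_rfl, by simp⟩
  | succ k ih =>
    obtain ⟨B, hBA, hB⟩ := A.exists_subset_card_eq (n := min A.card (k * d)) (min_le_left _ _)
    obtain ⟨l, hl, hlen, hmet⟩ := ih (A := B) (by omega)
    obtain ⟨l', hl', hlen', hmet'⟩ := h ((A \ B).image (net l)) <| Finset.card_image_le.trans <| by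
      rw [Finset.card_sdiff_of_subset hBA, hB]
      rw [Nat.succ_mul] at hA
      omega
    refine ⟨l ++ l', hl.append hl', ?_, fun a ha b hb => ?_⟩
    · rw [List.length_append, Nat.mul_succ]
      omega
    · by_cases haB : a ∈ B
      · exact (hmet a haB b hb).append_right l'
      · exact Met.append_left l (hmet' _ (Finset.mem_image_of_mem _ (Finset.mem_sdiff.2 ⟨ha, haB⟩))
          _ ((net l).injective.ne hb))

variable [Fintype V]

theorem exists_strategy_into_neighborhood (hG : G.Connected) {U : Finset V}
    (hU : U.card ≤ G.degree r) :
    ∃ l, IsStrategy G l ∧ l.length = 12 * Fintype.card V ∧ ∀ a ∈ U, G.Adj r (net l a) := by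
  set N := G.neighborFinset r
  have hcard : ((U \ N : Finset V) : Set V).encard ≤ ((N \ U : Finset V) : Set V).encard := by
    rw [Set.encard_coe_eq_coe_finsetCard, Set.encard_coe_eq_coe_finsetCard, Nat.cast_le]
    exact Finset.card_sdiff_le_card_sdiff_iff.2 hU
  have : Nonempty V := ⟨r⟩
  obtain ⟨w, hwN, hinj⟩ := (U \ N).finite_toSet.exists_injOn_of_encard_le hcard
  have hadj : ∀ a ∈ U \ N, G.Adj r (w a) := fun a ha => by
    simpa [N] using (Finset.mem_sdiff.1 (hwN ha)).1
  obtain ⟨l, hl, hlen, hseat, hfree⟩ := exists_strategy_procession (S := U \ N) hG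
    (fun a ha => by simpa [N] using (Finset.mem_sdiff.1 ha).2) (fun a ha => .inr (hadj a ha))
    fun a ha b hb _ h => hinj ha hb h
  refine ⟨l, hl, hlen, fun a ha => ?_⟩
  by_cases hN : G.Adj r a
  · rwa [(hfree a hN fun b hb h => (Finset.mem_sdiff.1 (hwN hb)).2 (h ▸ ha)).1]
  · have haS : a ∈ U \ N := Finset.mem_sdiff.2 ⟨ha, by simpa [N] using hN⟩
    exact hseat a haS (hadj a haS) ▸ hadj a haS

theorem exists_strategy_met_neighborhood (hG : G.Connected) (r : V) :
    ∃ l, IsStrategy G l ∧ l.length = 12 * Fintype.card V ∧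
      ∀ x, G.Adj r x → ∀ y, ¬G.Adj r y → Met G l x y := by
  obtain ⟨l, hl, hlen, -, hmet⟩ := exists_strategy_procession (r := r) (w := fun _ => r)
    (S := Finset.univ.filter fun y => ¬G.Adj r y) hG (by simp) (fun _ _ => .inl rfl)
    fun _ _ _ _ h _ => absurd h (G.loopless.irrefl r)
  exact ⟨l, hl, hlen, fun x hx y hy =>
    ((hmet x hx fun _ _ => hx.ne).2 y (by simpa using hy)).symm⟩

theorem exists_strategy_met_of_card_le (hG : G.Connected) {U : Finset V}
    (hU : U.card ≤ G.degree r) :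
    ∃ l, IsStrategy G l ∧ l.length ≤ 26 * Fintype.card V ∧ ∀ a ∈ U, ∀ b, b ≠ a → Met G l a b := by
  obtain ⟨gather, hgather, hlen, hadj⟩ := exists_strategy_into_neighborhood hG hU
  obtain ⟨star, hstar, hlen', hnet, hmet⟩ :=
    exists_strategy_met_in_star (G := G) (r := r) (G.neighborFinset r).toList (by simp)
  obtain ⟨visit, hvisit, hlen'', hmet'⟩ := exists_strategy_met_neighborhood hG r
  refine ⟨gather ++ (star ++ visit), hgather.append (hstar.append hvisit), ?_,
    fun a ha b hb => Met.append_left gather ?_⟩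
  · have hdeg := (G.degree_lt_card_verts r).le
    rw [Finset.length_toList, G.card_neighborFinset_eq_degree] at hlen'
    simp only [List.length_append]
    omega
  · by_cases hbN : G.Adj r (net gather b)
    · exact (hmet _ (by simpa using hadj a ha) _ hbN ((net gather).injective.ne hb)).append_right _
    · exact Met.append_left star (by
        simpa only [hnet, Perm.one_apply] using hmet' _ (hadj a ha) _ hbN)

theorem AC_mul_degree_le (hG : G.Connected) (r : V) :
    AC G * G.degree r ≤ 52 * Fintype.card V ^ 2 := by
  obtain ⟨d, hd⟩ : ∃ d, G.degree r = d := ⟨_, rfl⟩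
  rcases d.eq_zero_or_pos with rfl | hpos
  · simp [hd]
  set n := Fintype.card V
  obtain ⟨l, hl, hlen, hmet⟩ := exists_strategy_of_batches (A := Finset.univ) (d := d)
    (fun U hU => exists_strategy_met_of_card_le (r := r) hG (hU.trans hd.ge)) (n / d + 1)
    ((Nat.lt_mul_div_succ n hpos).le.trans_eq (mul_comm _ _))
  calc AC G * G.degree r ≤ 26 * n * (n / d + 1) * d := by
        rw [hd]
        gcongr
        exact (AC_le_length hl fun a b hab => hmet a (Finset.mem_univ a) b hab.symm).trans hlen
    _ = 26 * n * (n / d * d + d) := by ring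
    _ ≤ 26 * n * (n + n) := by
        gcongr
        · exact Nat.div_mul_le_self n d
        · exact hd ▸ (G.degree_lt_card_verts r).le
    _ = 52 * n ^ 2 := by ring

end

/-! ### Comparison of the two regimes -/

section

theorem log_add_pow_le {x : ℝ} (hx : 1 ≤ x) {k : ℕ} (hk : k ≠ 0) :
    (Real.log x + k) ^ k ≤ k ^ k * x := by
  have hk' : (0 : ℝ) < k := Nat.cast_pos.2 (Nat.pos_of_ne_zero hk)
  have hlog := Real.log_nonneg hx
  calc (Real.log x + k) ^ k = k ^ k * (Real.log x / k + 1) ^ k := by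
        rw [← mul_pow]
        congr 1
        field_simp
    _ ≤ k ^ k * Real.exp (Real.log x / k) ^ k := by
        gcongr
        exact Real.add_one_le_exp _
    _ = k ^ k * x := by
        rw [← Real.exp_nat_mul, mul_div_cancel₀ _ hk'.ne', Real.exp_log (by linarith)]

variable {V : Type*} {G : SimpleGraph V} [Fintype V]

theorem AC_mul_log_le (hG : G.Connected) :
    (AC G : ℝ) * Real.log (Fintype.card V) ≤ 5 * 7 ^ 7 * (Fintype.card V : ℝ) ^ 2 := by
  have := hG.nonempty
  obtain ⟨r, hr⟩ := G.exists_maximal_degree_vertex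
  have hhigh : (AC G : ℝ) * G.degree r ≤ 52 * (Fintype.card V : ℝ) ^ 2 := by
    exact_mod_cast AC_mul_degree_le hG r
  have hlow : (AC G : ℝ) ≤ 5 * (G.degree r + 1) ^ 6 * Fintype.card V := by
    exact_mod_cast AC_le_of_degree_le hG fun x => (G.degree_le_maxDegree x).trans hr.le
  have hn : (1 : ℝ) ≤ Fintype.card V := Nat.one_le_cast.2 Fintype.card_pos
  have hlog := Real.log_nonneg hn
  set n := (Fintype.card V : ℝ)
  rcases le_total (Real.log n) (G.degree r) with hdeg | hdeg
  · calc (AC G : ℝ) * Real.log n ≤ AC G * G.degree r := by gcongr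
      _ ≤ 52 * n ^ 2 := hhigh
      _ ≤ 5 * 7 ^ 7 * n ^ 2 := by gcongr; norm_num
  · calc (AC G : ℝ) * Real.log n ≤ 5 * (G.degree r + 1) ^ 6 * n * Real.log n := by gcongr
      _ ≤ 5 * (Real.log n + 7) ^ 6 * n * (Real.log n + 7) := by
          gcongr
          · norm_num
          · linarith
      _ = 5 * n * (Real.log n + 7) ^ 7 := by ring
      _ ≤ 5 * n * (7 ^ 7 * n) := by
          gcongr
          exact_mod_cast log_add_pow_le hn (k := 7) (by norm_num)
      _ = 5 * 7 ^ 7 * n ^ 2 := by ring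

end

end Acquaintance

/-- General upper bound: there is a constant `C > 0` such that every connected graph on
`n ≥ 2` vertices satisfies `AC(G) ≤ C · n² / log n`. -/
theorem AC_general_upper_bound :
    ∃ C : ℝ, 0 < C ∧ ∀ (V : Type) [Fintype V] (G : SimpleGraph V),
      G.Connected → 2 ≤ Fintype.card V →
      (AC G : ℝ) ≤ C * (Fintype.card V : ℝ) ^ 2 / Real.log (Fintype.card V) := by
  refine ⟨5 * 7 ^ 7, by norm_num, fun V _ G hG hcard => ?_⟩
  rw [le_div_iff₀ (Real.log_pos (Nat.one_lt_cast.2 hcard))]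
  exact Acquaintance.AC_mul_log_le hG
end

section
/- Let G = (V,E) be a finite tree, and let S, T ⊆ V be two subsets of equal size k = |S| = |T|. Let ℓ = max_{v ∈ S, u ∈ T} dist(v,u) be the maximal distance between a vertex in S and a vertex in T. Then there is a strategy of ℓ + 2(k−1) rounds of matchings in G (in each round a matching is chosen and the agents on the endpoints of each matching edge are swapped) after which the set of vertices occupied by the agents that initially occupied S is exactly T. -/
open scoped Classical

/-!
Let each of the `k` agents walk along a geodesic from `s i` to `t i`, the agent of rank `r`
starting in round `2 * r`, so that the last one arrives by round `ℓ + 2 * (k - 1)`. Two agents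
stay clear of each other if, at every vertex common to their geodesics, the one starting first is
at least as close to its source and at least as far from its target. Ranks with this property
exist when the pairing of the `s i` with the `t i` is cheapest for the cost
`∑ i, b ^ dist (s i) (t i)`. As the cost is strictly convex in the distance, exchanging the
targets of two crossing agents shows that the two can be ordered; exchanging targets around a
cycle of ordering constraints would be a strict saving. Taking `b > k` also minimises the largest
distance. Only distances enter the argument, so it works in every connected graph, provided some
pairing of the two sets has all its distances at most `ℓ`.
-/

section

variable {V ι : Type*} {G : SimpleGraph V}

theorem exists_isMatchingSwap_of_disjoint {p q : ι → V}
    (hpq : ∀ i, p i = q i ∨ G.Adj (p i) (q i))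
    (hdisj : ∀ i j, i ≠ j → Disjoint ({p i, q i} : Set V) {p j, q j}) :
    ∃ σ : Equiv.Perm V, IsMatchingSwap G σ ∧ ∀ i, σ (p i) = q i := by
  let f : V → V := fun v =>
    if h : ∃ i, v = p i ∨ v = q i then Equiv.swap (p h.choose) (q h.choose) v else v
  have f_pair : ∀ i v, v = p i ∨ v = q i → f v = Equiv.swap (p i) (q i) v := by
    intro i v hv
    have h : ∃ i, v = p i ∨ v = q i := ⟨i, hv⟩
    have hi : h.choose = i := by
      by_contra hne
      exact Set.disjoint_left.1 (hdisj _ _ hne) h.choose_spec hv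
    simp only [f, dif_pos h, hi]
  have f_left : ∀ i, f (p i) = q i := fun i => by
    rw [f_pair i _ (.inl rfl), Equiv.swap_apply_left]
  have f_right : ∀ i, f (q i) = p i := fun i => by
    rw [f_pair i _ (.inr rfl), Equiv.swap_apply_right]
  have f_else : ∀ v, (¬ ∃ i, v = p i ∨ v = q i) → f v = v := fun v h => dif_neg h
  have hf : Function.Involutive f := by
    intro v
    by_cases h : ∃ i, v = p i ∨ v = q i
    · obtain ⟨i, rfl | rfl⟩ := h <;> simp only [f_left, f_right]
    · rw [f_else v h, f_else v h]
  refine ⟨hf.toPerm f, fun v => ?_, f_left⟩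
  rw [hf.coe_toPerm, hf v]
  by_cases h : ∃ i, v = p i ∨ v = q i
  · obtain ⟨i, rfl | rfl⟩ := h
    · rw [f_left]
      exact (hpq i).imp Eq.symm fun h => ⟨h, rfl⟩
    · rw [f_right]
      exact (hpq i).imp id fun h => ⟨h.symm, rfl⟩
  · exact .inl (f_else v h)

theorem exists_strategy_of_trajectories {x : ι → ℕ → V}
    (hadj : ∀ i n, x i n = x i (n + 1) ∨ G.Adj (x i n) (x i (n + 1)))
    (hne : ∀ i j, i ≠ j → ∀ m n, m ≤ n + 1 → n ≤ m + 1 → x i m ≠ x j n) :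
    ∃ σ : ℕ → Equiv.Perm V,
      (∀ n, IsMatchingSwap G (σ n)) ∧ ∀ i n, positions σ n (x i 0) = x i n := by
  have hround : ∀ n, ∃ σ : Equiv.Perm V, IsMatchingSwap G σ ∧ ∀ i, σ (x i n) = x i (n + 1) := by
    intro n
    refine exists_isMatchingSwap_of_disjoint (fun i => hadj i n) fun i j hij => ?_
    rw [Set.disjoint_left]
    rintro v (rfl | rfl) (h | h) <;> exact hne i j hij _ _ (by lia) (by lia) h
  choose σ hσ hσx using hround
  refine ⟨σ, hσ, fun i n => ?_⟩
  induction n with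
  | zero => rfl
  | succ n ih => rw [positions, Function.comp_apply, ih, hσx]

theorem getVert_eq_or_adj_getVert_succ {u v : V} (p : G.Walk u v) (n : ℕ) :
    p.getVert n = p.getVert (n + 1) ∨ G.Adj (p.getVert n) (p.getVert (n + 1)) := by
  rcases lt_or_ge n p.length with h | h
  · exact .inr (p.adj_getVert_succ h)
  · exact .inl (by rw [p.getVert_of_length_le h, p.getVert_of_length_le (by lia)])

theorem dist_source_getVert {u v : V} {p : G.Walk u v} (hp : p.length = G.dist u v)
    (n : ℕ) : G.dist u (p.getVert n) = min n p.length := by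
  rw [← SimpleGraph.length_eq_dist_of_subwalk hp (p.isSubwalk_take n), p.take_length]

theorem dist_getVert_target {u v : V} {p : G.Walk u v} (hp : p.length = G.dist u v)
    (n : ℕ) : G.dist (p.getVert n) v = p.length - n := by
  rw [← SimpleGraph.length_eq_dist_of_subwalk hp (p.isSubwalk_drop n), p.drop_length]

/-- The vertex `x` lies on some geodesic from `u` to `v` (for `u`, `v` in the component of `x`). -/
def OnGeodesic (G : SimpleGraph V) (u v x : V) : Prop :=
  G.dist u x + G.dist x v = G.dist u v

theorem onGeodesic_getVert {u v : V} {p : G.Walk u v} (hp : p.length = G.dist u v) (n : ℕ) :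
    OnGeodesic G u v (p.getVert n) := by
  rw [OnGeodesic, dist_source_getVert hp, dist_getVert_target hp]
  lia

/-- The constraint that agent `i` starts before agent `j`, when each agent `i` walks along a
geodesic from `s i` to `t i`: at some crossing of the two routes, agent `j` is further from its
source than agent `i`, or agent `i` is further from its target than agent `j`. -/
def Precedes (G : SimpleGraph V) (s t : ι → V) (i j : ι) : Prop :=
  ∃ x, OnGeodesic G (s i) (t i) x ∧ OnGeodesic G (s j) (t j) x ∧
    (G.dist (s i) x < G.dist (s j) x ∨ G.dist x (t j) < G.dist x (t i))

/-- The hypothesis on `m` and `n` is what a head start of two rounds for agent `i` amounts to: at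
times at most one round apart, either `i` has made more steps than `j`, or neither has moved. -/
theorem getVert_ne_getVert_of_not_precedes (hG : G.Connected) {s t : ι → V}
    (hs : s.Injective) (ht : t.Injective) {i j : ι} (hij : i ≠ j) (hji : ¬ Precedes G s t j i)
    {p : G.Walk (s i) (t i)} (hp : p.length = G.dist (s i) (t i))
    {q : G.Walk (s j) (t j)} (hq : q.length = G.dist (s j) (t j))
    {m n : ℕ} (hmn : n < m ∨ m = 0 ∧ n = 0) : p.getVert m ≠ q.getVert n := by
  intro hx
  obtain ⟨hsource, htarget⟩ : G.dist (s i) (p.getVert m) ≤ G.dist (s j) (p.getVert m) ∧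
      G.dist (p.getVert m) (t j) ≤ G.dist (p.getVert m) (t i) := by
    by_contra h
    exact hji ⟨_, hx ▸ onGeodesic_getVert hq n, onGeodesic_getVert hp m, by lia⟩
  rcases hmn with hlt | ⟨rfl, rfl⟩
  · have hlen : p.length ≤ m := by
      have hi := dist_source_getVert hp m
      have hj := dist_source_getVert hq n
      rw [← hx] at hj
      lia
    rw [p.getVert_of_length_le hlen, SimpleGraph.dist_self, Nat.le_zero,
      hG.dist_eq_zero_iff] at htarget
    exact hij (ht htarget)
  · simp only [SimpleGraph.Walk.getVert_zero] at hx
    exact hij (hs hx)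

theorem exists_strategy_of_rank (hG : G.Connected) {s t : ι → V} (hs : s.Injective)
    (ht : t.Injective) {rank : ι → ℕ} (hinj : rank.Injective)
    (hrank : ∀ i j, Precedes G s t i j → rank i < rank j) :
    ∃ σ : ℕ → Equiv.Perm V, (∀ n, IsMatchingSwap G (σ n)) ∧
      ∀ i n, G.dist (s i) (t i) + 2 * rank i ≤ n → positions σ n (s i) = t i := by
  choose p hp using fun i => hG.exists_walk_length_eq_dist (s i) (t i)
  -- Truncated subtraction keeps agent `i` at its source until round `2 * rank i`.
  let x : ι → ℕ → V := fun i n => (p i).getVert (n - 2 * rank i)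
  have hadj : ∀ i n, x i n = x i (n + 1) ∨ G.Adj (x i n) (x i (n + 1)) := by
    intro i n
    rcases lt_or_ge n (2 * rank i) with h | h
    · exact .inl (congrArg (p i).getVert (by lia))
    · simpa only [x, Nat.sub_add_comm h] using
        getVert_eq_or_adj_getVert_succ (p i) (n - 2 * rank i)
  have hne_of_lt : ∀ i j, rank i < rank j → ∀ m n, n ≤ m + 1 → x i m ≠ x j n :=
    fun i j hij m n hmn => getVert_ne_getVert_of_not_precedes hG hs ht
      (fun h => hij.ne (congrArg rank h)) (fun h => hij.asymm (hrank j i h)) (hp i) (hp j) (by lia)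
  have hne : ∀ i j, i ≠ j → ∀ m n, m ≤ n + 1 → n ≤ m + 1 → x i m ≠ x j n := by
    intro i j hij m n hmn hnm
    rcases lt_or_gt_of_ne (hinj.ne hij) with h | h
    · exact hne_of_lt i j h m n hnm
    · exact (hne_of_lt j i h n m hmn).symm
  obtain ⟨σ, hσ, hpos⟩ := exists_strategy_of_trajectories hadj hne
  refine ⟨σ, hσ, fun i n hn => ?_⟩
  have hpos_i := hpos i n
  simp only [x, Nat.zero_sub, SimpleGraph.Walk.getVert_zero] at hpos_i
  rw [hpos_i, (p i).getVert_of_length_le (by have := hp i; lia)]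

theorem exists_perm_of_forall_exists_rel [Finite ι] {r : ι → ι → Prop} {C : Set ι}
    (hC : C.Nonempty) (hr : ∀ j ∈ C, ∃ i ∈ C, r i j) :
    ∃ τ : Equiv.Perm ι, (∀ i, τ i = i ∨ r (τ i) i) ∧ ∃ i, r (τ i) i := by
  choose! g hgC hg using hr
  -- A minimal nonempty set stable under `g` is permuted by `g`.
  obtain ⟨D, ⟨hD, hDC, hgD⟩, hmin⟩ :=
    (Set.toFinite {D : Set ι | D.Nonempty ∧ D ⊆ C ∧ Set.MapsTo g D D}).exists_minimal
      ⟨C, hC, subset_rfl, hgC⟩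
  have himage : D ⊆ g '' D :=
    hmin ⟨hD.image g, hgD.image_subset.trans hDC, (Set.mapsTo_image g D).mono_left hgD.image_subset⟩
      hgD.image_subset
  have hbij : Set.BijOn g D D := (Set.toFinite D).surjOn_iff_bijOn_of_mapsTo hgD |>.1 himage
  let τ : Equiv.Perm ι := Equiv.Perm.ofSubtype hbij.equiv
  have hτ : ∀ i ∈ D, τ i = g i := fun i hi => Equiv.Perm.ofSubtype_apply_of_mem _ hi
  refine ⟨τ, fun i => ?_, ?_⟩
  · by_cases hi : i ∈ D
    · exact .inr (hτ i hi ▸ hg i (hDC hi))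
    · exact .inl (Equiv.Perm.ofSubtype_apply_of_not_mem _ hi)
  · obtain ⟨i, hi⟩ := hD
    exact ⟨i, hτ i hi ▸ hg i (hDC hi)⟩

variable [Fintype ι]

theorem exists_equiv_fin_lt_of_wellFounded {r : ι → ι → Prop} (hr : WellFounded r) :
    ∃ e : ι ≃ Fin (Fintype.card ι), ∀ i j, r i j → e i < e j := by
  have : IsWellFounded ι r := ⟨hr⟩
  obtain ⟨lt, hle, hlt⟩ := IsWellFounded.exists_well_order_ge r
  let := linearOrderOfSTO lt
  let e := (Fintype.orderIsoFinOfCardEq ι rfl).symm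
  exact ⟨e.toEquiv, fun i j hij => e.lt_iff_lt.2 (hle i j hij)⟩

/-- The pairing of sources `s i` with targets `t i` has least total cost among all pairings of these
sources with these targets, a pair at distance `d` costing `b ^ d`. -/
def IsCheapestPairing (G : SimpleGraph V) (b : ℕ) (s t : ι → V) : Prop :=
  ∀ τ : Equiv.Perm ι, ∑ i, b ^ G.dist (s i) (t i) ≤ ∑ i, b ^ G.dist (s (τ i)) (t i)

theorem exists_isCheapestPairing (G : SimpleGraph V) (b : ℕ) (s t : ι → V) :
    ∃ τ : Equiv.Perm ι, IsCheapestPairing G b (s ∘ τ) t := by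
  obtain ⟨τ, hτ⟩ :=
    Finite.exists_min fun τ : Equiv.Perm ι => ∑ i, b ^ G.dist (s (τ i)) (t i)
  exact ⟨τ, fun ρ => hτ (τ * ρ)⟩

namespace IsCheapestPairing

variable {b ℓ : ℕ} {s t : ι → V}

theorem dist_le (h : IsCheapestPairing G b s t) (hb : Fintype.card ι < b) (τ : Equiv.Perm ι)
    (hτ : ∀ i, G.dist (s (τ i)) (t i) ≤ ℓ) (i : ι) : G.dist (s i) (t i) ≤ ℓ := by
  have hb1 : 1 < b := by have := Fintype.card_pos_iff.2 ⟨i⟩; lia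
  refine Nat.lt_succ_iff.1 ((Nat.pow_lt_pow_iff_right hb1).1 ?_)
  calc b ^ G.dist (s i) (t i)
      ≤ ∑ i, b ^ G.dist (s i) (t i) :=
        Finset.single_le_sum (f := fun i => b ^ G.dist (s i) (t i))
          (fun _ _ => Nat.zero_le _) (Finset.mem_univ i)
    _ ≤ ∑ i, b ^ G.dist (s (τ i)) (t i) := h τ
    _ ≤ Fintype.card ι * b ^ ℓ := by
        rw [← smul_eq_mul, ← Finset.card_univ]
        exact Finset.sum_le_card_nsmul _ _ _ fun i _ => Nat.pow_le_pow_right hb1.le (hτ i)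
    _ < b * b ^ ℓ := Nat.mul_lt_mul_of_pos_right hb (Nat.pow_pos hb1.le)
    _ = b ^ (ℓ + 1) := (pow_succ' b ℓ).symm

theorem pow_dist_add_pow_dist_le (h : IsCheapestPairing G b s t) {i j : ι} (hij : i ≠ j) :
    b ^ G.dist (s i) (t i) + b ^ G.dist (s j) (t j) ≤
      b ^ G.dist (s j) (t i) + b ^ G.dist (s i) (t j) := by
  have hsum := h (Equiv.swap i j)
  have hrest : ∑ k ∈ {i, j}ᶜ, b ^ G.dist (s (Equiv.swap i j k)) (t k) =
      ∑ k ∈ {i, j}ᶜ, b ^ G.dist (s k) (t k) :=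
    Finset.sum_congr rfl fun k hk => by
      simp only [Finset.mem_compl, Finset.mem_insert, Finset.mem_singleton, not_or] at hk
      rw [Equiv.swap_apply_of_ne_of_ne hk.1 hk.2]
  rw [← Finset.sum_add_sum_compl {i, j}, ← Finset.sum_add_sum_compl {i, j}, hrest,
    Finset.sum_pair hij, Finset.sum_pair hij, Equiv.swap_apply_left, Equiv.swap_apply_right] at hsum
  exact Nat.le_of_add_le_add_right hsum

theorem not_dist_lt_and_dist_lt (hG : G.Connected) (hb : 1 < b) (h : IsCheapestPairing G b s t)
    {i j : ι} {x : V} (hi : OnGeodesic G (s i) (t i) x) (hj : OnGeodesic G (s j) (t j) x) :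
    ¬ (G.dist (s i) x < G.dist (s j) x ∧ G.dist x (t i) < G.dist x (t j)) := by
  rintro ⟨hsource, htarget⟩
  have hij : i ≠ j := by
    rintro rfl
    exact hsource.false
  refine (h.pow_dist_add_pow_dist_le hij).not_gt ?_
  calc b ^ G.dist (s j) (t i) + b ^ G.dist (s i) (t j)
      ≤ b ^ (G.dist (s j) x + G.dist x (t i)) + b ^ (G.dist (s i) x + G.dist x (t j)) := by
        gcongr <;> first | exact hb.le | exact hG.dist_triangle
    _ < b ^ (G.dist (s i) x + G.dist x (t i)) + b ^ (G.dist (s j) x + G.dist x (t j)) := by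
        simp only [pow_add]
        rw [add_comm]
        exact mul_add_mul_lt_mul_add_mul (Nat.pow_lt_pow_right hb hsource)
          (Nat.pow_lt_pow_right hb htarget)
    _ = b ^ G.dist (s i) (t i) + b ^ G.dist (s j) (t j) := by rw [hi, hj]

theorem two_mul_pow_dist_lt_of_precedes (hG : G.Connected) (hb : 1 < b)
    (h : IsCheapestPairing G b s t) {i j : ι} (hij : Precedes G s t i j) :
    2 * b ^ G.dist (s i) (t j) < b ^ G.dist (s i) (t i) + b ^ G.dist (s j) (t j) := by
  obtain ⟨x, hi, hj, hlt⟩ := hij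
  have hexchange := h.not_dist_lt_and_dist_lt hG hb hi hj
  have hexchange' := h.not_dist_lt_and_dist_lt hG hb hj hi
  have htriangle := hG.dist_triangle (u := s i) (v := x) (w := t j)
  unfold OnGeodesic at hi hj
  have hle_i : b ^ G.dist (s i) (t j) ≤ b ^ G.dist (s i) (t i) :=
    Nat.pow_le_pow_right hb.le (by lia)
  have hle_j : b ^ G.dist (s i) (t j) ≤ b ^ G.dist (s j) (t j) :=
    Nat.pow_le_pow_right hb.le (by lia)
  have hlt' : G.dist (s i) (t j) < G.dist (s i) (t i) ∨
      G.dist (s i) (t j) < G.dist (s j) (t j) := by lia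
  rcases hlt' with hlt' | hlt' <;> have := Nat.pow_lt_pow_right hb hlt' <;> lia

theorem wellFounded_precedes (hG : G.Connected) (hb : 1 < b) (h : IsCheapestPairing G b s t) :
    WellFounded (Precedes G s t) := by
  rw [WellFounded.wellFounded_iff_has_min]
  by_contra! hcycle
  obtain ⟨C, hC, hCr⟩ := hcycle
  obtain ⟨τ, hτ, i₀, hi₀⟩ := exists_perm_of_forall_exists_rel hC hCr
  let cost : ι → ℕ := fun i => b ^ G.dist (s i) (t i)
  have hlt : ∀ i, Precedes G s t (τ i) i → 2 * b ^ G.dist (s (τ i)) (t i) < cost (τ i) + cost i :=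
    fun i hi => h.two_mul_pow_dist_lt_of_precedes hG hb hi
  have hle : ∀ i, 2 * b ^ G.dist (s (τ i)) (t i) ≤ cost (τ i) + cost i := by
    intro i
    rcases hτ i with hi | hi
    · rw [hi, two_mul]
    · exact (hlt i hi).le
  have hsum : 2 * ∑ i, b ^ G.dist (s (τ i)) (t i) < 2 * ∑ i, cost i :=
    calc 2 * ∑ i, b ^ G.dist (s (τ i)) (t i)
        = ∑ i, 2 * b ^ G.dist (s (τ i)) (t i) := Finset.mul_sum ..
      _ < ∑ i, (cost (τ i) + cost i) :=
          Finset.sum_lt_sum (fun i _ => hle i) ⟨i₀, Finset.mem_univ i₀, hlt i₀ hi₀⟩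
      _ = 2 * ∑ i, cost i := by rw [Finset.sum_add_distrib, Equiv.sum_comp τ cost, two_mul]
  have := h τ
  lia

end IsCheapestPairing

theorem image_univ_coe_equiv [DecidableEq V] {S : Finset V} (e : ι ≃ S) :
    Finset.univ.image (fun i => (e i : V)) = S := by
  ext v
  simp only [Finset.mem_image, Finset.mem_univ, true_and]
  exact ⟨fun ⟨i, hi⟩ => hi ▸ (e i).2, fun hv => ⟨e.symm ⟨v, hv⟩, by rw [e.apply_symm_apply]⟩⟩

theorem tree_routing_general [DecidableEq V] (hG : G.Connected) {S T : Finset V} (e : S ≃ T)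
    {ℓ : ℕ} (he : ∀ v : S, G.dist v (e v) ≤ ℓ) :
    ∃ σ : ℕ → Equiv.Perm V,
      (∀ i < ℓ + 2 * (S.card - 1), IsMatchingSwap G (σ i)) ∧
      S.image (positions σ (ℓ + 2 * (S.card - 1))) = T := by
  let t : S → V := fun v => e v
  obtain ⟨τ, hτ⟩ := exists_isCheapestPairing G (Fintype.card S + 2) Subtype.val t
  have hdist := hτ.dist_le (ℓ := ℓ) (by lia) τ⁻¹ (by simpa [t] using he)
  obtain ⟨rank, hrank⟩ := exists_equiv_fin_lt_of_wellFounded (hτ.wellFounded_precedes hG (by lia))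
  obtain ⟨σ, hσ, hpos⟩ := exists_strategy_of_rank hG
    (Subtype.val_injective.comp τ.injective) (Subtype.val_injective.comp e.injective)
    (Fin.val_injective.comp rank.injective) hrank
  have harrive : ∀ i : S, positions σ (ℓ + 2 * (S.card - 1)) (τ i) = e i := by
    intro i
    refine hpos i _ (add_le_add (hdist i) ?_)
    have : (rank i : ℕ) < S.card := (rank i).isLt.trans_eq (Fintype.card_coe S)
    simp only [Function.comp_apply]
    lia
  refine ⟨σ, fun i _ => hσ i, ?_⟩
  calc S.image (positions σ (ℓ + 2 * (S.card - 1)))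
      = (Finset.univ.image fun i => (τ i : V)).image (positions σ (ℓ + 2 * (S.card - 1))) := by
        rw [image_univ_coe_equiv]
    _ = Finset.univ.image fun i => (e i : V) := by
        rw [Finset.image_image]
        exact Finset.image_congr fun i _ => harrive i
    _ = T := image_univ_coe_equiv e

end

/-- Routing in trees: in a finite tree `G`, given vertex subsets `S`, `T` of equal size
`k`, with `ℓ` the maximal distance between a vertex of `S` and a vertex of `T`, there is a
strategy of `ℓ + 2(k − 1)` rounds of matchings after which the agents that started on `S`
occupy exactly the vertices of `T`. -/
theorem tree_routing {V : Type*} [Fintype V] [DecidableEq V] (G : SimpleGraph V)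
    (hG : G.IsTree) (S T : Finset V) (k : ℕ) (hS : S.card = k) (hT : T.card = k)
    (ℓ : ℕ) (hℓ : ℓ = (S ×ˢ T).sup fun x => G.dist x.1 x.2) :
    ∃ σ : ℕ → Equiv.Perm V,
      (∀ i < ℓ + 2 * (k - 1), IsMatchingSwap G (σ i)) ∧
      S.image (positions σ (ℓ + 2 * (k - 1))) = T := by
  subst hS
  exact tree_routing_general hG.connected (Finset.equivOfCardEq hT.symm) fun v =>
    hℓ ▸ Finset.le_sup (f := fun x : V × V => G.dist x.1 x.2)
      (Finset.mk_mem_product v.2 (Finset.equivOfCardEq hT.symm v).2)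
end

section
/- There exists a constant C > 0 such that for every caterpillar T on n vertices (n ≥ 1), the acquaintance time satisfies AC(T) ≤ C · n. -/
open scoped Classical

/-- A caterpillar: a tree in which every vertex is on, or adjacent to, a single path
(the spine). -/
def IsCaterpillar {V : Type*} (G : SimpleGraph V) : Prop :=
  G.IsTree ∧ ∃ (u v : V) (P : G.Walk u v), P.IsPath ∧
    ∀ w : V, w ∈ P.support ∨ ∃ x ∈ P.support, G.Adj w x

/-!
Let `m` be the number of vertices of the spine and `n` that of the graph.  If the agents on the
spine play odd-even transposition, they circulate: within `2 * m` rounds each of them visits every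
spine vertex and meets every other one.  As the spine is dominating, they also meet all the agents
waiting off the spine.

It remains to bring any `m` chosen agents onto the spine.  Let the spine circulate, and before each
of its rounds let every spine vertex holding an unchosen agent swap it for a chosen one next to it
off the spine, if there is one.  Suppose that a chosen agent is still at `w` off the spine after a
full circulation, and let `h` be the neighbour of `w` on the spine.  Every place in the circulation
has passed `h` and left it with a chosen agent, so there are `m` chosen agents on the spine besides
the one at `w`, which is too many.

So `m` agents get acquainted with everyone in `6 * m` rounds, and about `n / m` such phases suffice.
-/

open SimpleGraph Set

variable {V W : Type*} {G : SimpleGraph V} {H : SimpleGraph W} {σ τ : ℕ → Equiv.Perm V}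

/-! ### Strategies -/

/-- A strategy for the acquaintance process on `G`: a sequence of matchings, infinite so that
strategies can be followed for any number of rounds. -/
def IsStrategy (G : SimpleGraph V) (σ : ℕ → Equiv.Perm V) : Prop :=
  ∀ i, IsMatchingSwap G (σ i)

lemma isMatchingSwap_one : IsMatchingSwap G 1 := fun _ ↦ Or.inl rfl

lemma positions_injective (σ : ℕ → Equiv.Perm V) (t : ℕ) : (positions σ t).Injective := by
  induction t with
  | zero => exact Function.injective_id
  | succ t ih => exact (σ t).injective.comp ih

/-- The strategy that follows `σ` for `t` rounds and then starts `τ`. -/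
def concatStrategy (σ : ℕ → Equiv.Perm V) (t : ℕ) (τ : ℕ → Equiv.Perm V) : ℕ → Equiv.Perm V :=
  fun i ↦ if i < t then σ i else τ (i - t)

lemma IsStrategy.concat (hσ : IsStrategy G σ) (hτ : IsStrategy G τ) (t : ℕ) :
    IsStrategy G (concatStrategy σ t τ) := by
  intro i
  unfold concatStrategy
  split_ifs
  · exact hσ i
  · exact hτ (i - t)

lemma positions_concatStrategy_of_le {t i : ℕ} (hi : i ≤ t) :
    positions (concatStrategy σ t τ) i = positions σ i := by
  induction i with
  | zero => rfl
  | succ i ih => simp only [positions, ih (Nat.le_of_succ_le hi), concatStrategy,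
      if_pos (Nat.lt_of_succ_le hi)]

lemma positions_concatStrategy_add (t j : ℕ) :
    positions (concatStrategy σ t τ) (t + j) = positions τ j ∘ positions σ t := by
  induction j with
  | zero => exact positions_concatStrategy_of_le le_rfl
  | succ j ih =>
    rw [← add_assoc]
    simp only [positions, ih, Function.comp_assoc, concatStrategy,
      if_neg (Nat.le_add_right t j).not_gt, Nat.add_sub_cancel_left]

lemma Acquainted.concat_left {t s : ℕ} {a b : V} (h : Acquainted G σ t a b) :
    Acquainted G (concatStrategy σ t τ) (t + s) a b := by
  obtain ⟨i, hi, hadj⟩ := h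
  exact ⟨i, by omega, by rwa [positions_concatStrategy_of_le hi]⟩

lemma Acquainted.concat_right {t s : ℕ} {a b : V}
    (h : Acquainted G τ s (positions σ t a) (positions σ t b)) :
    Acquainted G (concatStrategy σ t τ) (t + s) a b := by
  obtain ⟨i, hi, hadj⟩ := h
  exact ⟨t + i, by omega, by rwa [positions_concatStrategy_add]⟩

lemma IsStrategy.exists_positions_succ (hσ : IsStrategy G σ) (t : ℕ) {π : Equiv.Perm V}
    (hπ : IsMatchingSwap G π) :
    ∃ τ, IsStrategy G τ ∧ positions τ (t + 1) = π ∘ positions σ t :=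
  ⟨concatStrategy σ t fun _ ↦ π, hσ.concat (fun _ ↦ hπ) t, positions_concatStrategy_add t 1⟩

/-- The strategy on `V` that follows `ρ` on the image of `f` and keeps all the other agents where
they are. -/
noncomputable def extendStrategy (ρ : ℕ → Equiv.Perm W) (f : W ↪ V) : ℕ → Equiv.Perm V :=
  fun i ↦ (ρ i).viaEmbedding f

lemma IsMatchingSwap.viaEmbedding {π : Equiv.Perm W} (hπ : IsMatchingSwap H π) (f : Copy H G) :
    IsMatchingSwap G (π.viaEmbedding f.toEmbedding) := by
  intro v
  by_cases hv : v ∈ range f.toEmbedding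
  · obtain ⟨x, rfl⟩ := hv
    simp only [Equiv.Perm.viaEmbedding_apply]
    exact (hπ x).imp (congrArg _) (And.imp f.toHom.map_adj (congrArg _))
  · exact Or.inl (π.viaEmbedding_apply_of_notMem _ _ hv)

lemma positions_extendStrategy_apply (ρ : ℕ → Equiv.Perm W) (f : W ↪ V) (t : ℕ) (x : W) :
    positions (extendStrategy ρ f) t (f x) = f (positions ρ t x) := by
  induction t with
  | zero => rfl
  | succ t ih =>
    simp only [positions, Function.comp_apply, ih, extendStrategy, Equiv.Perm.viaEmbedding_apply]

lemma positions_extendStrategy_of_notMem (ρ : ℕ → Equiv.Perm W) (f : W ↪ V) (t : ℕ) {v : V}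
    (hv : v ∉ range f) : positions (extendStrategy ρ f) t v = v := by
  induction t with
  | zero => rfl
  | succ t ih =>
    simp only [positions, Function.comp_apply, ih, extendStrategy,
      Equiv.Perm.viaEmbedding_apply_of_notMem _ _ _ hv]

/-! ### Circulations -/

/-- A circulation of period `T` on `H`: a strategy under which every agent visits every vertex
and every two agents get acquainted within `T` rounds. -/
structure IsCirculation (H : SimpleGraph W) (ρ : ℕ → Equiv.Perm W) (T : ℕ) : Prop where
  isStrategy : IsStrategy H ρ
  visits (x y : W) : ∃ t < T, positions ρ t x = y
  acquainted : Pairwise (Acquainted H ρ T)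

/-- A dominating set of `G`: every vertex is in `D` or has a neighbour in `D`. -/
def IsDominating (G : SimpleGraph V) (D : Set V) : Prop :=
  ∀ v, v ∈ D ∨ ∃ x ∈ D, G.Adj v x

variable {ρ : ℕ → Equiv.Perm W} {T : ℕ}

lemma IsDominating.exists_neighbor {D : Set V} (hD : IsDominating G D) :
    ∃ home : V → V, ∀ v ∉ D, home v ∈ D ∧ G.Adj v (home v) := by
  have h (v : V) : ∃ x, v ∉ D → x ∈ D ∧ G.Adj v x := by
    rcases hD v with hv | ⟨x, hx⟩
    · exact ⟨v, fun h ↦ absurd hv h⟩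
    · exact ⟨x, fun _ ↦ hx⟩
  exact Classical.skolem.mp h

lemma IsCirculation.acquainted_extendStrategy (hρ : IsCirculation H ρ T) (f : Copy H G)
    (hf : IsDominating G (range f)) (x : W) {v : V} (hv : v ≠ f x) :
    Acquainted G (extendStrategy ρ f.toEmbedding) T (f x) v := by
  have hpos (t : ℕ) (y : W) : positions (extendStrategy ρ f.toEmbedding) t (f y) =
      f (positions ρ t y) := positions_extendStrategy_apply ρ f.toEmbedding t y
  by_cases hvf : v ∈ range f
  · obtain ⟨y, rfl⟩ := hvf
    obtain ⟨t, ht, hadj⟩ := hρ.acquainted (show x ≠ y from fun h ↦ hv (congrArg f h.symm))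
    exact ⟨t, ht, by rw [hpos, hpos]; exact f.toHom.map_adj hadj⟩
  · obtain ⟨-, ⟨y, rfl⟩, hadj⟩ := (hf v).resolve_left hvf
    obtain ⟨t, ht, rfl⟩ := hρ.visits x y
    exact ⟨t, ht.le, by
      simpa only [hpos, positions_extendStrategy_of_notMem ρ f.toEmbedding t hvf] using hadj.symm⟩

/-! ### Loading chosen agents onto the spine -/

lemma exists_isMatchingSwap_of_injOn {A : Set V} {g : V → V} (hg : InjOn g A)
    (hadj : ∀ a ∈ A, G.Adj a (g a)) (hdisj : Disjoint A (g '' A)) :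
    ∃ π : Equiv.Perm V, IsMatchingSwap G π ∧ (∀ a ∈ A, π a = g a) ∧
      (∀ a ∈ A, π (g a) = a) ∧ ∀ v ∉ A, v ∉ g '' A → π v = v := by
  choose! inv hinv using fun v (hv : v ∈ g '' A) ↦ hv
  let swap (v : V) : V := if v ∈ A then g v else if v ∈ g '' A then inv v else v
  have swap_left : ∀ a ∈ A, swap a = g a := fun a ha ↦ if_pos ha
  have swap_right : ∀ a ∈ A, swap (g a) = a := by
    intro a ha
    have hga := mem_image_of_mem g ha
    simp only [swap, if_neg (hdisj.notMem_of_mem_right hga), if_pos hga]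
    exact hg (hinv _ hga).1 ha (hinv _ hga).2
  have swap_of_notMem : ∀ v ∉ A, v ∉ g '' A → swap v = v := fun v hv hv' ↦ by
    simp only [swap, if_neg hv, if_neg hv']
  have swap_cases (v : V) : (swap v = v ∨ G.Adj v (swap v)) ∧ swap (swap v) = v := by
    by_cases hvA : v ∈ A
    · rw [swap_left v hvA, swap_right v hvA]
      exact ⟨Or.inr (hadj v hvA), rfl⟩
    by_cases hvg : v ∈ g '' A
    · obtain ⟨a, ha, rfl⟩ := hvg
      rw [swap_right a ha, swap_left a ha]
      exact ⟨Or.inr (hadj a ha).symm, rfl⟩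
    · have hv := swap_of_notMem v hvA hvg
      exact ⟨Or.inl hv, by rw [hv, hv]⟩
  have hswap : Function.Involutive swap := fun v ↦ (swap_cases v).2
  exact ⟨hswap.toPerm, fun v ↦ (swap_cases v).1.imp_right fun h ↦ ⟨h, hswap v⟩,
    swap_left, swap_right, swap_of_notMem⟩

lemma exists_isMatchingSwap_pull {D : Set V} {home : V → V}
    (hhome : ∀ w ∉ D, home w ∈ D ∧ G.Adj w (home w)) (O : Set V) :
    ∃ π : Equiv.Perm V, IsMatchingSwap G π ∧ D ∩ O ⊆ π '' O ∧
      ∀ w ∈ π '' O, w ∉ D → w ∈ O ∧ home w ∈ π '' O := by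
  obtain ⟨A, hA, hbij⟩ := exists_subset_bijOn {w | w ∈ O ∧ w ∉ D ∧ home w ∉ O} home
  have hAD : ∀ w ∈ A, home w ∈ D ∧ G.Adj w (home w) := fun w hw ↦ hhome w (hA hw).2.1
  have himage : home '' A ⊆ D ∩ Oᶜ := by
    rintro _ ⟨a, ha, rfl⟩
    exact ⟨(hAD a ha).1, (hA ha).2.2⟩
  have hdisj : Disjoint A (home '' A) :=
    disjoint_left.mpr fun a ha ha' ↦ (hA ha).2.1 (himage ha').1
  obtain ⟨π, hπ, hπA, hπhome, hπfix⟩ :=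
    exists_isMatchingSwap_of_injOn hbij.injOn (fun a ha ↦ (hAD a ha).2) hdisj
  have hkeep : D ∩ O ⊆ π '' O := fun v ⟨hvD, hvO⟩ ↦
    ⟨v, hvO, hπfix v (fun hv ↦ (hA hv).2.1 hvD) fun hv ↦ (himage hv).2 hvO⟩
  refine ⟨π, hπ, hkeep, fun w hw hwD ↦ ?_⟩
  have hwA : w ∉ A := by
    intro hwA
    have : home w ∈ O := by
      rwa [← hπhome w hwA, π.injective.mem_set_image] at hw
    exact (hA hwA).2.2 this
  have hwO : w ∈ O := by
    rwa [← hπfix w hwA fun h ↦ hwD (himage h).1, π.injective.mem_set_image] at hw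
  refine ⟨hwO, ?_⟩
  by_cases hhO : home w ∈ O
  · exact hkeep ⟨(hhome w hwD).1, hhO⟩
  · obtain ⟨a, ha, hah⟩ : home w ∈ home '' A := hbij.image_eq ▸ ⟨w, ⟨hwO, hwD, hhO⟩, rfl⟩
    exact ⟨a, (hA ha).1, (hπA a ha).trans hah⟩

/-- The invariant of the loading procedure after `t` rounds of the circulation `ρ` on the image of
`f`, where `O` is the set of vertices occupied by chosen agents: if a chosen agent is still at `w`
off the image, then each place `x` of the circulation that has passed the neighbour `home w` of `w`
now carries a chosen agent. -/
def IsSwept (ρ : ℕ → Equiv.Perm W) (f : W → V) (home : V → V) (t : ℕ) (O : Set V) : Prop :=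
  ∀ w ∈ O, w ∉ range f → ∀ x, (∃ s < t, f (positions ρ s x) = home w) → f (positions ρ t x) ∈ O

lemma IsSwept.exists_succ {f : W ↪ V} {home : V → V} {t : ℕ} {O : Set V}
    (hO : IsSwept ρ f home t O) (hhome : ∀ w ∉ range f, home w ∈ range f ∧ G.Adj w (home w)) :
    ∃ π : Equiv.Perm V, IsMatchingSwap G π ∧
      IsSwept ρ f home (t + 1) (extendStrategy ρ f t '' (π '' O)) := by
  obtain ⟨π, hπ, hkeep, hpull⟩ := exists_isMatchingSwap_pull hhome O
  refine ⟨π, hπ, ?_⟩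
  rintro w hw hwf x ⟨s, hs, hsx⟩
  have hwπ : w ∈ π '' O := by
    have hfix : extendStrategy ρ f t w = w := (ρ t).viaEmbedding_apply_of_notMem f w hwf
    rwa [← (extendStrategy ρ f t).injective.mem_set_image, hfix]
  obtain ⟨hwO, hhomeπ⟩ := hpull w hwπ hwf
  have hx : f (positions ρ t x) ∈ π '' O := by
    rcases Nat.lt_succ_iff_lt_or_eq.mp hs with hst | rfl
    · exact hkeep ⟨mem_range_self _, hO w hwO hwf x ⟨s, hst, hsx⟩⟩
    · rwa [hsx]
  exact ⟨_, hx, (ρ t).viaEmbedding_apply f _⟩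

lemma exists_isSwept (hρ : IsStrategy H ρ) (f : Copy H G) {home : V → V}
    (hhome : ∀ w ∉ range f, home w ∈ range f ∧ G.Adj w (home w)) (S : Set V) (t : ℕ) :
    ∃ τ, IsStrategy G τ ∧ IsSwept ρ f home t (positions τ (2 * t) '' S) := by
  induction t with
  | zero => exact ⟨1, fun _ ↦ isMatchingSwap_one, fun _ _ _ _ ⟨_, h, _⟩ ↦ absurd h (by omega)⟩
  | succ t ih =>
    obtain ⟨τ₀, hτ₀, hswept⟩ := ih
    obtain ⟨π, hπ, hpull⟩ := IsSwept.exists_succ (f := f.toEmbedding) hswept hhome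
    obtain ⟨τ₁, hτ₁, hpos₁⟩ := hτ₀.exists_positions_succ (2 * t) hπ
    obtain ⟨τ₂, hτ₂, hpos₂⟩ := hτ₁.exists_positions_succ (2 * t + 1) ((hρ t).viaEmbedding f)
    refine ⟨τ₂, hτ₂, ?_⟩
    rw [mul_add_one, hpos₂, hpos₁, image_comp, image_comp]
    exact hpull

lemma IsCirculation.exists_load [Fintype W] (hρ : IsCirculation H ρ T) (f : Copy H G)
    (hf : IsDominating G (range f)) (S : Finset V) (hS : S.card ≤ Fintype.card W) :
    ∃ τ, IsStrategy G τ ∧ ∀ a ∈ S, positions τ (2 * T) a ∈ range f := by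
  obtain ⟨home, hhome⟩ := hf.exists_neighbor
  obtain ⟨τ, hτ, hswept⟩ := exists_isSwept hρ.isStrategy f hhome S T
  refine ⟨τ, hτ, fun a ha ↦ ?_⟩
  by_contra haf
  obtain ⟨h, hh⟩ := (hhome _ haf).1
  have hrange : range f ⊆ positions τ (2 * T) '' S := by
    rintro _ ⟨y, rfl⟩
    obtain ⟨x, rfl⟩ := Finite.surjective_of_injective (positions_injective ρ T) y
    obtain ⟨t, ht, hvisit⟩ := hρ.visits x h
    exact hswept _ (mem_image_of_mem _ ha) haf x ⟨t, ht, by rw [hvisit, hh]⟩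
  have hsub : insert (positions τ (2 * T) a) (Finset.univ.map f.toEmbedding) ⊆
      S.image (positions τ (2 * T)) := by
    rw [← Finset.coe_subset, Finset.coe_insert, Finset.coe_map, Finset.coe_univ, image_univ,
      Finset.coe_image]
    exact insert_subset (mem_image_of_mem _ ha) hrange
  have hcard := (Finset.card_le_card hsub).trans Finset.card_image_le
  have hnotMem : positions τ (2 * T) a ∉ Finset.univ.map f.toEmbedding := fun h ↦
    haf ((Finset.mem_map.mp h).imp fun _ ↦ And.right)
  rw [Finset.card_insert_of_notMem hnotMem, Finset.card_map, Finset.card_univ] at hcard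
  omega

lemma IsCirculation.exists_phase [Fintype W] (hρ : IsCirculation H ρ T) (f : Copy H G)
    (hf : IsDominating G (range f)) (S : Finset V) (hS : S.card ≤ Fintype.card W) :
    ∃ τ, IsStrategy G τ ∧ ∀ a ∈ S, ∀ b, b ≠ a → Acquainted G τ (3 * T) a b := by
  obtain ⟨τ, hτ, hload⟩ := hρ.exists_load f hf S hS
  refine ⟨concatStrategy τ (2 * T) (extendStrategy ρ f.toEmbedding),
    hτ.concat (fun i ↦ (hρ.isStrategy i).viaEmbedding f) _, fun a ha b hb ↦ ?_⟩
  obtain ⟨x, hx⟩ := hload a ha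
  rw [show 3 * T = 2 * T + T by ring]
  apply Acquainted.concat_right
  rw [← hx]
  exact hρ.acquainted_extendStrategy f hf x (hx ▸ (positions_injective τ _).ne hb)

lemma IsCirculation.exists_phases [Fintype W] (hρ : IsCirculation H ρ T) (f : Copy H G)
    (hf : IsDominating G (range f)) (k : ℕ) (S : Finset V) (hS : S.card ≤ k * Fintype.card W) :
    ∃ τ, IsStrategy G τ ∧ ∀ a ∈ S, ∀ b, b ≠ a → Acquainted G τ (k * (3 * T)) a b := by
  induction k generalizing S with
  | zero =>
    obtain rfl : S = ∅ := by simpa using hS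
    exact ⟨1, fun _ ↦ isMatchingSwap_one, by simp⟩
  | succ k ih =>
    obtain ⟨S₁, hS₁, hcard⟩ :=
      Finset.exists_subset_card_eq (min_le_left S.card (k * Fintype.card W))
    obtain ⟨τ₁, hτ₁, hacq₁⟩ := ih S₁ (hcard.trans_le (min_le_right _ _))
    let S₂ := (S \ S₁).image (positions τ₁ (k * (3 * T)))
    have hS₂ : S₂.card ≤ Fintype.card W := by
      refine Finset.card_image_le.trans ?_
      rw [Finset.card_sdiff_of_subset hS₁, hcard]
      rw [Nat.succ_mul] at hS
      omega
    obtain ⟨τ₂, hτ₂, hacq₂⟩ := hρ.exists_phase f hf S₂ hS₂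
    refine ⟨concatStrategy τ₁ (k * (3 * T)) τ₂, hτ₁.concat hτ₂ _, fun a ha b hb ↦ ?_⟩
    rw [Nat.succ_mul k (3 * T)]
    by_cases haS₁ : a ∈ S₁
    · exact (hacq₁ a haS₁ b hb).concat_left
    · exact (hacq₂ _ (Finset.mem_image_of_mem _ (Finset.mem_sdiff.mpr ⟨ha, haS₁⟩)) _
        ((positions_injective τ₁ _).ne hb)).concat_right

theorem IsCirculation.AC_le [Fintype V] [Fintype W] (hρ : IsCirculation H ρ T) (f : Copy H G)
    (hf : IsDominating G (range f)) {k : ℕ} (hk : Fintype.card V ≤ k * Fintype.card W) :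
    AC G ≤ k * (3 * T) := by
  obtain ⟨τ, hτ, hacq⟩ := hρ.exists_phases f hf k Finset.univ hk
  exact Nat.sInf_le ⟨τ, fun i _ ↦ hτ i, fun a b hab ↦ hacq a (Finset.mem_univ a) b hab.symm⟩

/-! ### Odd-even transposition on a path -/

/-- The vertex with which vertex `i` of the path `0, …, m - 1` is swapped in round `t` of odd-even
transposition, in which the edges `{i, i + 1}` with `i ≡ t` modulo 2 are used.  A vertex that is on
none of these edges is sent to itself: at `i = 0` this is the truncated `0 - 1 = 0`. -/
def oddEvenPartner (m t i : ℕ) : ℕ :=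
  if i % 2 = t % 2 then (if i + 1 < m then i + 1 else i) else i - 1

lemma oddEvenPartner_lt {m i : ℕ} (t : ℕ) (hi : i < m) : oddEvenPartner m t i < m := by
  unfold oddEvenPartner
  split_ifs <;> omega

lemma oddEvenPartner_oddEvenPartner {m i : ℕ} (t : ℕ) (hi : i < m) :
    oddEvenPartner m t (oddEvenPartner m t i) = i := by
  unfold oddEvenPartner
  split_ifs <;> omega

lemma oddEvenPartner_eq_or (m t i : ℕ) :
    oddEvenPartner m t i = i ∨ i + 1 = oddEvenPartner m t i ∨ oddEvenPartner m t i + 1 = i := by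
  unfold oddEvenPartner
  split_ifs <;> omega

/-- Odd-even transposition, as a strategy on the path with `m` vertices. -/
def oddEvenSwap (m t : ℕ) : Equiv.Perm (Fin m) :=
  Function.Involutive.toPerm (fun i ↦ ⟨oddEvenPartner m t i, oddEvenPartner_lt t i.isLt⟩)
    fun i ↦ Fin.ext (oddEvenPartner_oddEvenPartner t i.isLt)

lemma isStrategy_oddEvenSwap (m : ℕ) : IsStrategy (pathGraph m) (oddEvenSwap m) := fun t i ↦
  (oddEvenPartner_eq_or m t i).imp Fin.ext fun h ↦
    ⟨pathGraph_adj.mpr h, Fin.ext (oddEvenPartner_oddEvenPartner t i.isLt)⟩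

/-- The vertex of the path `0, …, m - 1` below position `x` of a closed track with `2 * m` positions
that runs once up and once down the path.  Under odd-even transposition every agent advances by one
position in each round.  The track is only unrolled twice, to `x < 4 * m`, which covers
`2 * m` rounds. -/
def trackVertex (m x : ℕ) : ℕ :=
  if x < m then x else if x < 2 * m then 2 * m - 1 - x else
    if x < 3 * m then x - 2 * m else 4 * m - 1 - x

/-- The position on the track (see `trackVertex`) at which the agent from vertex `i` starts: of
the two positions `i` and `2 * m - 1 - i` above `i`, the even one, since in round `0` the agents on
even vertices move up. -/
def trackStart (m i : ℕ) : ℕ := if i % 2 = 0 then i else 2 * m - 1 - i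

lemma even_trackStart (m i : ℕ) : Even (trackStart m i) := by
  rw [Nat.even_iff]
  unfold trackStart
  split_ifs <;> omega

lemma trackStart_lt {m i : ℕ} (hi : i < m) : trackStart m i < 2 * m := by
  unfold trackStart
  split_ifs <;> omega

lemma trackStart_injOn (m : ℕ) : InjOn (trackStart m) (Iio m) := by
  intro i hi j hj h
  simp only [mem_Iio] at hi hj
  unfold trackStart at h
  split_ifs at h <;> omega

lemma trackVertex_trackStart {m i : ℕ} (hi : i < m) : trackVertex m (trackStart m i) = i := by
  unfold trackVertex trackStart
  split_ifs <;> omega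

lemma oddEvenPartner_trackVertex {m t x : ℕ} (hx : x + 1 < 4 * m) (hxt : x % 2 = t % 2) :
    oddEvenPartner m t (trackVertex m x) = trackVertex m (x + 1) := by
  unfold oddEvenPartner trackVertex
  split_ifs <;> omega

lemma val_positions_oddEvenSwap {m t : ℕ} (i : Fin m) (ht : t ≤ 2 * m) :
    (positions (oddEvenSwap m) t i).val = trackVertex m (trackStart m i + t) := by
  have hlt := trackStart_lt i.isLt
  obtain ⟨c, hc⟩ := even_trackStart m i
  induction t with
  | zero => exact (trackVertex_trackStart i.isLt).symm
  | succ t ih =>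
    change oddEvenPartner m t (positions (oddEvenSwap m) t i).val = _
    rw [ih (by omega), oddEvenPartner_trackVertex (by omega) (by omega), add_assoc]

lemma exists_trackVertex_add_eq {m c q : ℕ} (hc : c < 2 * m) (hq : q < m) :
    ∃ t < 2 * m, trackVertex m (c + t) = q := by
  by_cases hcq : c ≤ q
  · refine ⟨q - c, by omega, ?_⟩
    rw [Nat.add_sub_cancel' hcq, trackVertex, if_pos hq]
  · refine ⟨2 * m + q - c, by omega, ?_⟩
    rw [Nat.add_sub_cancel' (by omega), trackVertex]
    split_ifs <;> omega

lemma trackVertex_reflect {m d : ℕ} (hd : 0 < d) (hdm : d < m) :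
    trackVertex m (2 * m - 1 + d) + 1 = trackVertex m (2 * m - 1 - d) := by
  unfold trackVertex
  split_ifs <;> omega

lemma exists_trackVertex_adjacent {m c c' : ℕ} (hc : Even c) (hc' : Even c') (hlt : c < c')
    (hcm : c' < 2 * m) :
    ∃ t ≤ 2 * m, trackVertex m (c' + t) + 1 = trackVertex m (c + t) := by
  obtain ⟨d, rfl⟩ := hc
  obtain ⟨d', rfl⟩ := hc'
  -- At this time the two agents are symmetric about the end `2 * m - 1` of the track.
  refine ⟨2 * m - 1 - (d + d'), by omega, ?_⟩
  convert trackVertex_reflect (m := m) (d := d' - d) (by omega) (by omega) using 3 <;> omega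

theorem isCirculation_oddEvenSwap (m : ℕ) :
    IsCirculation (pathGraph m) (oddEvenSwap m) (2 * m) where
  isStrategy := isStrategy_oddEvenSwap m
  visits i q := by
    obtain ⟨t, ht, hvisit⟩ := exists_trackVertex_add_eq (trackStart_lt i.isLt) q.isLt
    exact ⟨t, ht, Fin.ext ((val_positions_oddEvenSwap i ht.le).trans hvisit)⟩
  acquainted i j hij := by
    have hne : trackStart m i ≠ trackStart m j :=
      (trackStart_injOn m).ne i.isLt j.isLt (Fin.val_ne_of_ne hij)
    have hi := even_trackStart m i
    have hj := even_trackStart m j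
    rcases hne.lt_or_gt with hlt | hlt
    · obtain ⟨t, ht, hadj⟩ := exists_trackVertex_adjacent hi hj hlt (trackStart_lt j.isLt)
      refine ⟨t, ht, pathGraph_adj.mpr (Or.inr ?_)⟩
      rwa [val_positions_oddEvenSwap i ht, val_positions_oddEvenSwap j ht]
    · obtain ⟨t, ht, hadj⟩ := exists_trackVertex_adjacent hj hi hlt (trackStart_lt i.isLt)
      refine ⟨t, ht, pathGraph_adj.mpr (Or.inl ?_)⟩
      rwa [val_positions_oddEvenSwap i ht, val_positions_oddEvenSwap j ht]

lemma range_pathGraphCopy {u v : V} {P : G.Walk u v} (hP : P.IsPath) :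
    range hP.pathGraphCopy = {w | w ∈ P.support} := by
  ext w
  constructor
  · rintro ⟨i, rfl⟩
    exact List.getElem_mem (l := P.support) (n := i) _
  · intro hw
    obtain ⟨i, hi, rfl⟩ := List.mem_iff_getElem.mp hw
    exact ⟨⟨i, by rwa [P.length_support] at hi⟩, rfl⟩

theorem AC_caterpillar_linear_general [Fintype V] {u v : V} {P : G.Walk u v} (hP : P.IsPath)
    (hdom : IsDominating G {w | w ∈ P.support}) : AC G ≤ 12 * Fintype.card V := by
  set n := Fintype.card V
  set m := P.length + 1
  have hmn : m ≤ n := hP.length_lt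
  have hphases : n ≤ (n / m + 1) * Fintype.card (Fin m) := by
    rw [Fintype.card_fin, mul_comm]
    exact (Nat.lt_mul_div_succ n P.length.succ_pos).le
  calc AC G ≤ (n / m + 1) * (3 * (2 * m)) :=
        (isCirculation_oddEvenSwap m).AC_le hP.pathGraphCopy
          (by rwa [range_pathGraphCopy]) hphases
    _ = 6 * (n / m * m) + 6 * m := by ring
    _ ≤ 6 * n + 6 * n := by gcongr; exact Nat.div_mul_le_self n m
    _ = 12 * n := by ring

/-- There is a constant `C > 0` such that every caterpillar on `n ≥ 1` vertices has
acquaintance time at most `C · n`. -/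
theorem AC_caterpillar_linear :
    ∃ C : ℝ, 0 < C ∧ ∀ (V : Type) [Fintype V] (G : SimpleGraph V),
      IsCaterpillar G → 1 ≤ Fintype.card V → (AC G : ℝ) ≤ C * (Fintype.card V : ℝ) := by
  refine ⟨12, by norm_num, fun V _ G ⟨_, _, _, _, hP, hdom⟩ _ ↦ ?_⟩
  exact_mod_cast AC_caterpillar_linear_general hP hdom
end

section
/- If T is a tree on n vertices (n ≥ 1), then T contains a subgraph that is a caterpillar on at least log₂ n vertices. -/
open scoped Classical

/-!
Root the tree at `r` and order its vertices by ancestry, so that `Finset.Ici v` is the set of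
descendants of `v` and `v ⋖ c` means that `c` is a child of `v`. Starting at the root, walk down,
always stepping to a child with the most descendants. If the current vertex has `k` children, the
number of descendants plus one drops by a factor of at most `k + 1 ≤ 2 ^ k`, while the children of
vertices on the walk are pairwise distinct. So the walk and its neighbours, which form a
caterpillar, number at least `log₂ n`. The count uses only the order: it holds for ascending
walks in any graph containing the Hasse diagram of a partial order with finite upper sets.
-/

section ClosedNeighborSet

variable {V : Type*} {G : SimpleGraph V} {s t : Set V}

/-- The closed neighborhood `N[s]` of a vertex set `s`. A caterpillar is a tree that equals the
closed neighborhood of some path. -/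
def closedNeighborSet (G : SimpleGraph V) (s : Set V) : Set V :=
  {w | w ∈ s ∨ ∃ x ∈ s, G.Adj w x}

lemma subset_closedNeighborSet : s ⊆ closedNeighborSet G s := fun _ => Or.inl

lemma closedNeighborSet_mono (hst : s ⊆ t) : closedNeighborSet G s ⊆ closedNeighborSet G t :=
  fun _ => Or.imp (@hst _) fun ⟨x, hx, hwx⟩ => ⟨x, hst hx, hwx⟩

lemma connected_induce_closedNeighborSet (hs : (G.induce s).Connected) :
    (G.induce (closedNeighborSet G s)).Connected := by
  obtain ⟨u, hu⟩ := hs.nonempty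
  refine SimpleGraph.induce_connected_of_patches u (subset_closedNeighborSet hu) fun {w} hw => ?_
  obtain hws | ⟨x, hx, hwx⟩ := hw
  · exact ⟨s, subset_closedNeighborSet, hu, hws, hs _ _⟩
  · have hsw : (G.induce (s ∪ {w})).Connected :=
      SimpleGraph.connected_induce_union hs.preconnected .of_subsingleton hx
        (Set.mem_singleton w) hwx.symm
    exact ⟨s ∪ {w}, Set.union_subset subset_closedNeighborSet
      (Set.singleton_subset_iff.2 (Or.inr ⟨x, hx, hwx⟩)), Or.inl hu, Or.inr rfl, hsw _ _⟩

lemma isCaterpillar_induce_closedNeighborSet (hG : G.IsAcyclic) {u v : V} {P : G.Walk u v}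
    (hP : P.IsPath) : IsCaterpillar (G.induce (closedNeighborSet G {x | x ∈ P.support})) := by
  set N := closedNeighborSet G {x | x ∈ P.support}
  have hPN : ∀ x ∈ P.support, x ∈ N := fun _ => Or.inl
  refine ⟨⟨connected_induce_closedNeighborSet P.connected_induce_support, hG.induce N⟩,
    _, _, P.induce N hPN, ?_, ?_⟩
  · apply SimpleGraph.Walk.IsPath.of_map (f := (SimpleGraph.Embedding.induce N).toHom)
    rwa [SimpleGraph.Walk.map_induce]
  · rintro ⟨w, hw | ⟨x, hx, hwx⟩⟩
    · left
      simpa using hw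
    · right
      exact ⟨⟨x, hPN x hx⟩, by simpa using hx, hwx⟩

end ClosedNeighborSet

section HeavyPath

variable {α : Type*} [PartialOrder α] {G : SimpleGraph α} {a b : α}

lemma adj_of_covBy (hG : SimpleGraph.hasse α ≤ G) (hab : a ⋖ b) : G.Adj a b :=
  hG (SimpleGraph.hasse_adj.2 (Or.inl hab))

variable [LocallyFiniteOrderTop α]

/-- The finset of elements covering `a`; for the ancestor order of a rooted tree, these are the
children of `a`. -/
noncomputable def upperCovers (a : α) : Finset α := {b ∈ Finset.Ici a | a ⋖ b}

lemma mem_upperCovers : b ∈ upperCovers a ↔ a ⋖ b := by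
  simpa [upperCovers] using CovBy.le

lemma Ici_subset_insert_biUnion_upperCovers (a : α) :
    Finset.Ici a ⊆ insert a ((upperCovers a).biUnion Finset.Ici) := by
  let : LocallyFiniteOrder α :=
    LocallyFiniteOrder.ofFiniteIcc fun a _ => (Set.finite_Ici a).subset Set.Icc_subset_Ici_self
  intro x hx
  obtain rfl | hax := (Finset.mem_Ici.1 hx).eq_or_lt
  · exact Finset.mem_insert_self _ _
  · obtain ⟨b, hab, hbx⟩ := exists_covBy_le_of_lt hax
    exact Finset.mem_insert_of_mem
      (Finset.mem_biUnion.2 ⟨b, mem_upperCovers.2 hab, Finset.mem_Ici.2 hbx⟩)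

lemma card_Ici_le_card_upperCovers_mul_add_one {m : ℕ}
    (hm : ∀ b ∈ upperCovers a, (Finset.Ici b).card ≤ m) :
    (Finset.Ici a).card ≤ (upperCovers a).card * m + 1 :=
  calc (Finset.Ici a).card
      ≤ ((upperCovers a).biUnion Finset.Ici).card + 1 :=
        (Finset.card_le_card (Ici_subset_insert_biUnion_upperCovers a)).trans
          (Finset.card_insert_le _ _)
    _ ≤ (upperCovers a).card * m + 1 := by
        gcongr
        exact Finset.card_biUnion_le_card_mul _ _ _ hm

/-- The part of the closed neighborhood of `s` lying above `a`. Restricting to `Finset.Ici a`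
lets the contributions of successive vertices of an ascending path be counted without overlap. -/
noncomputable def closedNeighborsAbove (G : SimpleGraph α) (a : α) (s : Set α) : Finset α :=
  {x ∈ Finset.Ici a | x ∈ closedNeighborSet G s}

lemma insert_upperCovers_subset_closedNeighborsAbove (hG : SimpleGraph.hasse α ≤ G) {s : Set α}
    (ha : a ∈ s) : insert a (upperCovers a) ⊆ closedNeighborsAbove G a s := by
  intro x hx
  obtain rfl | hx := Finset.mem_insert.1 hx
  · simp [closedNeighborsAbove, subset_closedNeighborSet ha]
  · have hax : a ⋖ x := mem_upperCovers.1 hx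
    exact Finset.mem_filter.2
      ⟨Finset.mem_Ici.2 hax.le, Or.inr ⟨a, ha, (adj_of_covBy hG hax).symm⟩⟩

lemma closedNeighborsAbove_subset_insert (hab : a ≤ b) (s : Set α) :
    closedNeighborsAbove G b s ⊆ closedNeighborsAbove G a (insert a s) := by
  intro x hx
  obtain ⟨hbx, hxs⟩ := Finset.mem_filter.1 hx
  exact Finset.mem_filter.2 ⟨Finset.Ici_subset_Ici.2 hab hbx,
    closedNeighborSet_mono (Set.subset_insert a s) hxs⟩

lemma card_upperCovers_add_card_closedNeighborsAbove_le (hG : SimpleGraph.hasse α ≤ G)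
    (hab : a ⋖ b) (s : Set α) :
    (upperCovers a).card + (closedNeighborsAbove G b s).card ≤
      (closedNeighborsAbove G a (insert a s)).card := by
  set C := insert a ((upperCovers a).erase b)
  have hC : C.card = (upperCovers a).card := by
    have ha : a ∉ (upperCovers a).erase b := fun h =>
      (mem_upperCovers.1 (Finset.mem_of_mem_erase h)).ne rfl
    rw [Finset.card_insert_of_notMem ha, Finset.card_erase_add_one (mem_upperCovers.2 hab)]
  have hdisj : Disjoint C (closedNeighborsAbove G b s) := by
    refine Finset.disjoint_left.2 fun x hxC hx => ?_
    have hbx : b ≤ x := Finset.mem_Ici.1 (Finset.mem_filter.1 hx).1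
    obtain rfl | hxC := Finset.mem_insert.1 hxC
    · exact hab.lt.not_ge hbx
    · obtain ⟨hxb, hax⟩ := Finset.mem_erase.1 hxC
      exact (mem_upperCovers.1 hax).2 hab.lt (hbx.lt_of_ne' hxb)
  have hCN : C ⊆ closedNeighborsAbove G a (insert a s) :=
    (Finset.insert_subset_insert a (Finset.erase_subset b _)).trans
      (insert_upperCovers_subset_closedNeighborsAbove hG (Set.mem_insert a s))
  rw [← hC, ← Finset.card_union_of_disjoint hdisj]
  exact Finset.card_le_card (Finset.union_subset hCN (closedNeighborsAbove_subset_insert hab.le s))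

lemma mul_add_one_lt_two_pow_add {k m l : ℕ} (hm : 0 < m) (hml : m < 2 ^ l) :
    k * m + 1 < 2 ^ (k + l) :=
  calc k * m + 1 < (k + 1) * (m + 1) := by linarith
    _ ≤ 2 ^ k * 2 ^ l := Nat.mul_le_mul Nat.lt_two_pow_self hml
    _ = 2 ^ (k + l) := (pow_add 2 k l).symm

theorem exists_isPath_card_Ici_lt_two_pow (hG : SimpleGraph.hasse α ≤ G) (a : α) :
    ∃ (b : α) (P : G.Walk a b), P.IsPath ∧ (∀ x ∈ P.support, a ≤ x) ∧
      (Finset.Ici a).card < 2 ^ (closedNeighborsAbove G a {x | x ∈ P.support}).card := by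
  induction hn : (Finset.Ici a).card using Nat.strong_induction_on generalizing a with
  | _ n ih =>
  subst hn
  obtain hleaf | hne := (upperCovers a).eq_empty_or_nonempty
  · refine ⟨a, .nil, .nil, by simp, ?_⟩
    have hIci : (Finset.Ici a).card ≤ 1 := by
      simpa [hleaf] using card_Ici_le_card_upperCovers_mul_add_one (a := a) (m := 0)
    have ha : a ∈ closedNeighborsAbove G a {x | x ∈ (SimpleGraph.Walk.nil : G.Walk a a).support} :=
      insert_upperCovers_subset_closedNeighborsAbove hG (SimpleGraph.Walk.start_mem_support _)
        (Finset.mem_insert_self a _)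
    exact hIci.trans_lt (Nat.one_lt_two_pow (Finset.card_ne_zero_of_mem ha))
  · obtain ⟨c, hc, hmax⟩ :=
      (upperCovers a).exists_max_image (fun b => (Finset.Ici b).card) hne
    have hac : a ⋖ c := mem_upperCovers.1 hc
    obtain ⟨b, P, hP, hcP, hlt⟩ :=
      ih _ (Finset.card_lt_card (Finset.Ici_ssubset_Ici.2 hac.lt)) c rfl
    have haP : a ∉ P.support := fun h => hac.lt.not_ge (hcP a h)
    have hsupport : {x | x ∈ (SimpleGraph.Walk.cons (adj_of_covBy hG hac) P).support} =
        insert a {x | x ∈ P.support} := by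
      ext x
      simp
    refine ⟨b, .cons (adj_of_covBy hG hac) P, hP.cons haP, ?_, ?_⟩
    · simpa using fun x hx => hac.le.trans (hcP x hx)
    · rw [hsupport]
      calc (Finset.Ici a).card
          ≤ (upperCovers a).card * (Finset.Ici c).card + 1 :=
            card_Ici_le_card_upperCovers_mul_add_one hmax
        _ < 2 ^ ((upperCovers a).card + (closedNeighborsAbove G c {x | x ∈ P.support}).card) :=
            mul_add_one_lt_two_pow_add (Finset.card_pos.2 Finset.nonempty_Ici) hlt
        _ ≤ 2 ^ (closedNeighborsAbove G a (insert a {x | x ∈ P.support})).card :=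
            Nat.pow_le_pow_right two_pos
              (card_upperCovers_add_card_closedNeighborsAbove_le hG hac _)

end HeavyPath

section GeodesicOrder

variable {V : Type*} {G : SimpleGraph V}

/-- The order on the vertices of a connected graph in which `v ≤ w` when `v` lies on a geodesic
from the root `r` to `w`. In a tree this is the ancestor order. -/
abbrev geodesicOrder (hG : G.Connected) (r : V) : PartialOrder V where
  le v w := G.dist r w = G.dist r v + G.dist v w
  le_refl v := by simp
  le_trans u v w huv hvw := by
    have huw : G.dist u w ≤ G.dist u v + G.dist v w := hG.dist_triangle
    have hrw : G.dist r w ≤ G.dist r u + G.dist u w := hG.dist_triangle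
    omega
  le_antisymm v w hvw hwv := hG.dist_eq_zero_iff.1 (by omega)

lemma hasse_geodesicOrder_le (hG : G.Connected) (r : V) :
    letI := geodesicOrder hG r
    SimpleGraph.hasse V ≤ G := by
  let := geodesicOrder hG r
  have adj_of_covBy (v w : V) (hvw : v ⋖ w) : G.Adj v w := by
    have hle : G.dist r w = G.dist r v + G.dist v w := hvw.le
    obtain ⟨p, hp⟩ := hG.exists_walk_length_eq_dist v w
    cases p with
    | nil => exact absurd rfl hvw.ne
    | @cons _ c _ hvc q =>
      have hdvc : G.dist v c = 1 := SimpleGraph.dist_eq_one_iff_adj.2 hvc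
      have hdcw : G.dist c w ≤ q.length := SimpleGraph.dist_le q
      have hdrc : G.dist r c ≤ G.dist r v + G.dist v c := hG.dist_triangle
      have hdrw : G.dist r w ≤ G.dist r c + G.dist c w := hG.dist_triangle
      rw [SimpleGraph.Walk.length_cons] at hp
      have hvc_le : v ≤ c := show G.dist r c = G.dist r v + G.dist v c by omega
      have hcw_le : c ≤ w := show G.dist r w = G.dist r c + G.dist c w by omega
      obtain hcv | rfl := hvw.eq_or_eq hvc_le hcw_le
      · exact absurd hcv hvc.ne'
      · exact hvc
  rintro v w (hvw | hwv)
  · exact adj_of_covBy v w hvw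
  · exact (adj_of_covBy w v hwv).symm

theorem exists_isPath_card_lt_two_pow [Fintype V] (hG : G.Connected) (r : V) :
    ∃ (u : V) (P : G.Walk r u), P.IsPath ∧
      Fintype.card V < 2 ^ (closedNeighborSet G {x | x ∈ P.support}).ncard := by
  let := geodesicOrder hG r
  let : LocallyFiniteOrderTop V :=
    LocallyFiniteOrderTop.ofIci V (fun v => {w | v ≤ w}) fun v w => by simp
  have hhasse : SimpleGraph.hasse V ≤ G := hasse_geodesicOrder_le hG r
  obtain ⟨u, P, hP, -, hlt⟩ := exists_isPath_card_Ici_lt_two_pow hhasse r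
  have hroot (v : V) : r ≤ v := show G.dist r v = G.dist r r + G.dist r v by simp
  have hIci : Finset.Ici r = Finset.univ := by
    ext v
    simp [hroot v]
  have hN : (closedNeighborsAbove G r {x | x ∈ P.support} : Set V) =
      closedNeighborSet G {x | x ∈ P.support} := by
    simp [closedNeighborsAbove, hroot]
  refine ⟨u, P, hP, ?_⟩
  rwa [← hN, Set.ncard_coe_finset, ← Finset.card_univ, ← hIci]

end GeodesicOrder

/-- Every tree on `n ≥ 1` vertices contains a caterpillar on at least `log₂ n`
vertices as a subgraph. -/
theorem tree_contains_large_caterpillar {V : Type*} [Fintype V] (G : SimpleGraph V)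
    (hG : G.IsTree) :
    ∃ H : G.Subgraph, IsCaterpillar H.coe ∧
      Real.logb 2 (Fintype.card V) ≤ (H.verts.ncard : ℝ) := by
  obtain ⟨r⟩ := hG.connected.nonempty
  obtain ⟨u, P, hP, hcard⟩ := exists_isPath_card_lt_two_pow hG.connected r
  refine ⟨(⊤ : G.Subgraph).induce (closedNeighborSet G {x | x ∈ P.support}), ?_, ?_⟩
  · rw [← SimpleGraph.induce_eq_coe_induce_top]
    exact isCaterpillar_induce_closedNeighborSet hG.isAcyclic hP
  · have hpos : (0 : ℝ) < Fintype.card V := Nat.cast_pos.2 (Fintype.card_pos_iff.2 ⟨r⟩)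
    rw [SimpleGraph.Subgraph.induce_verts, Real.logb_le_iff_le_rpow one_lt_two hpos,
      Real.rpow_natCast]
    exact_mod_cast hcard.le
end
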